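/- arXiv:1203.5979 — 5 statements merged into one kernel-verified Lean document; each statement's English description precedes it below -/
import Mathlib

section
/- Let s ≥ 0 and let w₀, …, w_s be continuous functions on D̄ that are continuously differentiable on each open mesh cell P_{i,j} with bounded first partial derivatives, and let w_{r,⊥} denote the lower-left sampling of w_r. Then sup_{(x,y) ∈ D̄} | A_s(N; w_{0,⊥}(x,y), …, w_{s,⊥}(x,y)) − A_s(N; w₀(x,y), …, w_s(x,y)) | ≤ h · A_s(Ñ₁; ‖w₀‖_{1,D̄}, …, ‖w_s‖_{1,D̄}), where Ñ₁(u) = Ñ′(u)·u. -/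
open Set

noncomputable section

/-- The closed domain `D̄ = [0,X] × [0,Y]`. -/
def clD (X Y : ℝ) : Set (ℝ × ℝ) := Icc 0 X ×ˢ Icc 0 Y

/-- The open domain `D = (0,X) × (0,Y)`. -/
def opD (X Y : ℝ) : Set (ℝ × ℝ) := Ioo 0 X ×ˢ Ioo 0 Y

/-- Partial derivative in the first variable. -/
def pdx (u : ℝ × ℝ → ℝ) (p : ℝ × ℝ) : ℝ := deriv (fun t => u (t, p.2)) p.1

/-- Partial derivative in the second variable. -/
def pdy (u : ℝ × ℝ → ℝ) (p : ℝ × ℝ) : ℝ := deriv (fun t => u (p.1, t)) p.2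

/-- Mixed partial derivative `∂²u/∂x∂y` (derivative in `y` of the derivative in `x`). -/
def pdxy (u : ℝ × ℝ → ℝ) (p : ℝ × ℝ) : ℝ := pdy (pdx u) p

/-- The open mesh cell `P_{i,j} = (x_{i-1}, x_i) × (y_{j-1}, y_j)`, where
`x_i = i·(X/N₁)`, `y_j = j·(Y/N₂)`. -/
def cellOp (X Y : ℝ) (N₁ N₂ : ℕ) (i j : ℕ) : Set (ℝ × ℝ) :=
  Ioo (((i : ℝ) - 1) * (X / N₁)) ((i : ℝ) * (X / N₁)) ×ˢ
    Ioo (((j : ℝ) - 1) * (Y / N₂)) ((j : ℝ) * (Y / N₂))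

/-- The closed mesh cell `P̄_{i,j} = [x_{i-1}, x_i] × [y_{j-1}, y_j]`. -/
def cellCl (X Y : ℝ) (N₁ N₂ : ℕ) (i j : ℕ) : Set (ℝ × ℝ) :=
  Icc (((i : ℝ) - 1) * (X / N₁)) ((i : ℝ) * (X / N₁)) ×ˢ
    Icc (((j : ℝ) - 1) * (Y / N₂)) ((j : ℝ) * (Y / N₂))

/-- The lower-left corner `(x_{i-1}, y_{j-1})` of the cell `P_{i,j}`. -/
def meshNode (X Y : ℝ) (N₁ N₂ : ℕ) (i j : ℕ) : ℝ × ℝ :=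
  (((i : ℝ) - 1) * (X / N₁), ((j : ℝ) - 1) * (Y / N₂))

/-- `h = √(h₁² + h₂²)`, with `h₁ = X/N₁`, `h₂ = Y/N₂`. -/
def meshH (X Y : ℝ) (N₁ N₂ : ℕ) : ℝ := Real.sqrt ((X / N₁) ^ 2 + (Y / N₂) ^ 2)

/-- The Adomian polynomial `Aₙ(g; v₀,…,vₙ) = (1/n!)·(dⁿ/dτⁿ)[g(Σ_{s=0}^n v_s τ^s)]|_{τ=0}`. -/
def adomian (g : ℝ → ℝ) (n : ℕ) (v : ℕ → ℝ) : ℝ :=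
  ((n.factorial : ℝ))⁻¹ *
    iteratedDeriv n (fun τ => g (∑ s ∈ Finset.range (n + 1), v s * τ ^ s)) 0

/-- The lower-left sampling `w_⊥` of a function `w` on `D̄`: `w_⊥(x,y) = w(x_{i−1}, y_{j−1})`
for `(x,y) ∈ [x_{i−1}, x_i) × [y_{j−1}, y_j)`, extended to the top/right edges from the
last cells. -/
def sampling (X Y : ℝ) (N₁ N₂ : ℕ) (w : ℝ × ℝ → ℝ) (p : ℝ × ℝ) : ℝ :=
  w ((X / N₁) * ((min (N₁ - 1) ⌊p.1 / (X / N₁)⌋₊ : ℕ) : ℝ),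
     (Y / N₂) * ((min (N₂ - 1) ⌊p.2 / (Y / N₂)⌋₊ : ℕ) : ℝ))

/-- The norm `‖g‖_{1,D̄} = max{ sup_{D̄}|g|,
max_{i,j} √((sup_{P_{i,j}}|∂g/∂x|)² + (sup_{P_{i,j}}|∂g/∂y|)²) }`. -/
def norm1 (X Y : ℝ) (N₁ N₂ : ℕ) (g : ℝ × ℝ → ℝ) : ℝ :=
  max (⨆ p ∈ clD X Y, |g p|)
    (⨆ i ∈ Finset.Icc 1 N₁, ⨆ j ∈ Finset.Icc 1 N₂,
      Real.sqrt ((⨆ p ∈ cellOp X Y N₁ N₂ i j, |pdx g p|) ^ 2 +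
        (⨆ p ∈ cellOp X Y N₁ N₂ i j, |pdy g p|) ^ 2))

/-!
Rearranging an absolutely convergent double series gives `Aₙ(N; v) = ∑ₖ νₖ [τⁿ] V(τ)ᵏ`, where
`V(τ) = ∑_{r ≤ n} v_r τ^r`. Suppose that the coefficients of `P` and `Q` are bounded by those of `R`
in absolute value, and those of `P - Q` by those of `h R`. Factoring `Pᵏ - Qᵏ` through `P - Q`
bounds its coefficients by those of `h k Rᵏ`, and `∑ k |νₖ| uᵏ = Ñ'(u) u` turns these bounds into
`h Aₙ(Ñ₁; ·)`. For a function and its sampling, the assumptions hold when `R` has coefficients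
`‖w_r‖_{1,D̄}`: the mean value theorem in each variable on a mesh cell gives
`|w_⊥ - w| ≤ h₁ sup |∂w/∂x| + h₂ sup |∂w/∂y|`, which Cauchy–Schwarz bounds by `h ‖w‖_{1,D̄}`.
-/

section Majorization

open Polynomial

variable {R : Type*} [CommRing R] [LinearOrder R]

/-- Coefficientwise majorization of polynomials, as in Cauchy's method of majorants. The absolute
value is taken on the left only, so a majorant has nonnegative coefficients. -/
def MajorizedBy (p q : R[X]) : Prop := ∀ n, |p.coeff n| ≤ q.coeff n

lemma exists_majorizedBy (p : R[X]) : ∃ q, MajorizedBy p q :=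
  ⟨∑ i ∈ p.support, monomial i |p.coeff i|, fun n => by
    simp only [finsetSum_coeff, coeff_monomial, Finset.sum_ite_eq', mem_support_iff]
    split_ifs with hn
    · exact le_rfl
    · simp_all [abs]⟩

variable [IsOrderedRing R] {p p' q q' r d : R[X]}

namespace MajorizedBy

lemma coeff_nonneg (hpq : MajorizedBy p q) (n : ℕ) : 0 ≤ q.coeff n :=
  (abs_nonneg _).trans (hpq n)

lemma one : MajorizedBy (1 : R[X]) 1 := fun n => by
  rw [coeff_one]
  split_ifs <;> simp

lemma sum {ι : Type*} {s : Finset ι} {f g : ι → R[X]} (hfg : ∀ i ∈ s, MajorizedBy (f i) (g i)) :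
    MajorizedBy (∑ i ∈ s, f i) (∑ i ∈ s, g i) := fun n => by
  simp only [finsetSum_coeff]
  exact (Finset.abs_sum_le_sum_abs _ _).trans (Finset.sum_le_sum fun i hi => hfg i hi n)

lemma mul (hpq : MajorizedBy p q) (hpq' : MajorizedBy p' q') :
    MajorizedBy (p * p') (q * q') := fun n => by
  rw [coeff_mul, coeff_mul]
  refine (Finset.abs_sum_le_sum_abs _ _).trans (Finset.sum_le_sum fun ij _ => ?_)
  rw [abs_mul]
  exact mul_le_mul (hpq _) (hpq' _) (abs_nonneg _) (hpq.coeff_nonneg _)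

lemma pow (hpq : MajorizedBy p q) (k : ℕ) : MajorizedBy (p ^ k) (q ^ k) := by
  induction k with
  | zero => simpa only [pow_zero] using one
  | succ k ih => simpa only [pow_succ] using ih.mul hpq

lemma pow_sub_pow (hp : MajorizedBy p r) (hq : MajorizedBy q r) (hd : MajorizedBy (p - q) d)
    (k : ℕ) : MajorizedBy (p ^ k - q ^ k) (k * r ^ (k - 1) * d) := by
  rw [← geom_sum₂_mul, ← geom_sum₂_self]
  exact (sum fun i _ => (hp.pow i).mul (hq.pow (k - 1 - i))).mul hd

lemma abs_coeff_pow_sub_coeff_pow_le {h : R} (hp : MajorizedBy p r) (hq : MajorizedBy q r)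
    (hd : MajorizedBy (p - q) (C h * r)) (k n : ℕ) :
    |(p ^ k).coeff n - (q ^ k).coeff n| ≤ h * (k * (r ^ k).coeff n) := by
  have hbound := hp.pow_sub_pow hq hd k n
  have hmajorant : (k : R[X]) * r ^ (k - 1) * (C h * r) = C (h * k) * r ^ k := by
    rcases k with _ | k
    · simp
    · rw [Nat.add_sub_cancel, pow_succ, C_mul, C_eq_natCast]
      ring
  rwa [coeff_sub, hmajorant, coeff_C_mul, mul_assoc] at hbound

end MajorizedBy

end Majorization

section EntireSeries

variable {𝕜 : Type*} [RCLike 𝕜] {a : ℕ → 𝕜} {f : 𝕜 → 𝕜}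

open FormalMultilinearSeries in
lemma hasFPowerSeriesOnBall_ofScalars_of_hasSum
    (hf : ∀ z, HasSum (fun k => a k * z ^ k) (f z)) :
    HasFPowerSeriesOnBall f (ofScalars 𝕜 a) 0 ⊤ where
  r_le := by
    rw [radius_eq_top_of_summable_norm]
    intro r
    simpa [ofScalars_norm] using (hf ((r : ℝ) : 𝕜)).summable.norm
  r_pos := ENNReal.zero_lt_top
  hasSum := fun {z} _ => by simpa [ofScalars_apply_eq, mul_comm] using hf z

lemma iteratedDeriv_zero_div_factorial_of_hasSum
    (hf : ∀ z, HasSum (fun k => a k * z ^ k) (f z)) (n : ℕ) :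
    iteratedDeriv n f 0 / n.factorial = a n := by
  have hseries := (hasFPowerSeriesOnBall_ofScalars_of_hasSum hf).hasFPowerSeriesAt
  have huniq := hseries.analyticAt.hasFPowerSeriesAt.eq_formalMultilinearSeries hseries
  simpa using congrArg (FormalMultilinearSeries.coeff · n) huniq

open FormalMultilinearSeries in
lemma hasSum_deriv_mul_self (hf : ∀ z, HasSum (fun k => a k * z ^ k) (f z)) (z : 𝕜) :
    HasSum (fun k : ℕ => k * a k * z ^ k) (deriv f z * z) := by
  have hfderiv : HasSum (fun k => (ofScalars 𝕜 a).derivSeries k fun _ => z) (fderiv 𝕜 f z) := by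
    simpa only [zero_add] using
      (hasFPowerSeriesOnBall_ofScalars_of_hasSum hf).fderiv.hasSum (y := z) (by simp)
  have hterm (k : ℕ) : (ofScalars 𝕜 a).derivSeries k (fun _ => z) z =
      (k + 1 : ℕ) * a (k + 1) * z ^ (k + 1) := by
    rw [derivSeries_apply_diag, ofScalars_apply_eq, nsmul_eq_mul, smul_eq_mul, mul_assoc]
  have hvalue : fderiv 𝕜 f z z = deriv f z * z := by
    rw [fderiv_eq_smul_deriv, smul_eq_mul, mul_comm]
  have hshifted : HasSum (fun k : ℕ => (k + 1 : ℕ) * a (k + 1) * z ^ (k + 1)) (deriv f z * z) := by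
    simp only [← hterm, ← hvalue]
    exact hfderiv.mapL (ContinuousLinearMap.apply 𝕜 𝕜 z)
  rw [← hasSum_nat_add_iff' 1]
  simpa using hshifted

end EntireSeries

section Composition

open Polynomial

lemma hasSum_coeff_mul_pow {R : Type*} [Semiring R] [TopologicalSpace R] (p : R[X]) (t : R) :
    HasSum (fun m => p.coeff m * t ^ m) (p.eval t) := by
  rw [eval_eq_sum_range]
  refine hasSum_sum_of_ne_finset_zero fun m hm => ?_
  rw [coeff_eq_zero_of_natDegree_lt (by simpa using hm), zero_mul]

variable {a : ℕ → ℝ} {g : ℝ → ℝ}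

-- A majorant `q` of `p` dominates the double series by `∑ |a k| q(|t|) ^ k`.
lemma summable_mul_coeff_pow_mul_pow (ha : ∀ v : ℝ, Summable fun k => a k * v ^ k)
    (p : ℝ[X]) (t : ℝ) :
    Summable fun km : ℕ × ℕ => a km.1 * ((p ^ km.1).coeff km.2 * t ^ km.2) := by
  obtain ⟨q, hpq⟩ := exists_majorizedBy p
  have hrow (k : ℕ) : HasSum (fun m => |a k| * ((q ^ k).coeff m * |t| ^ m))
      (|a k| * (q.eval |t|) ^ k) := by
    simpa using (hasSum_coeff_mul_pow (q ^ k) |t|).mul_left |a k|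
  have hmajorant :
      Summable fun km : ℕ × ℕ => |a km.1| * ((q ^ km.1).coeff km.2 * |t| ^ km.2) := by
    refine (summable_prod_of_nonneg fun km => ?_).mpr ⟨fun k => (hrow k).summable, ?_⟩
    · have := (hpq.pow km.1).coeff_nonneg km.2
      simp only [Pi.zero_apply]
      positivity
    · simp only [(hrow _).tsum_eq]
      exact .of_abs (by simpa [abs_mul] using (ha (q.eval |t|)).abs)
  refine .of_norm_bounded hmajorant fun km => ?_
  rw [Real.norm_eq_abs, abs_mul, abs_mul, abs_pow]
  gcongr
  exact hpq.pow km.1 km.2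

lemma summable_mul_coeff_pow (ha : ∀ v : ℝ, Summable fun k => a k * v ^ k) (p : ℝ[X]) (m : ℕ) :
    Summable fun k => a k * (p ^ k).coeff m := by
  simpa using (summable_mul_coeff_pow_mul_pow ha p 1).prod_symm.prod_factor m

lemma hasSum_comp_eval (hg : ∀ v, HasSum (fun k => a k * v ^ k) (g v)) (p : ℝ[X]) (t : ℝ) :
    HasSum (fun m => (∑' k, a k * (p ^ k).coeff m) * t ^ m) (g (p.eval t)) := by
  have ha (v : ℝ) := (hg v).summable
  have hrow (k : ℕ) : HasSum (fun m => a k * ((p ^ k).coeff m * t ^ m)) (a k * p.eval t ^ k) := by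
    simpa using (hasSum_coeff_mul_pow (p ^ k) t).mul_left (a k)
  have hcol (m : ℕ) : HasSum (fun k => a k * ((p ^ k).coeff m * t ^ m))
      ((∑' k, a k * (p ^ k).coeff m) * t ^ m) := by
    simpa only [mul_assoc] using (summable_mul_coeff_pow ha p m).hasSum.mul_right (t ^ m)
  have hdouble := (summable_mul_coeff_pow_mul_pow ha p t).hasSum
  rw [(hdouble.prod_fiberwise hrow).unique (hg _)] at hdouble
  exact ((Equiv.prodComm ℕ ℕ).hasSum_iff.mpr hdouble).prod_fiberwise hcol

lemma hasSum_mul_coeff_pow (hg : ∀ v, HasSum (fun k => a k * v ^ k) (g v)) (p : ℝ[X]) (n : ℕ) :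
    HasSum (fun k => a k * (p ^ k).coeff n)
      (iteratedDeriv n (fun t => g (p.eval t)) 0 / n.factorial) := by
  rw [iteratedDeriv_zero_div_factorial_of_hasSum (hasSum_comp_eval hg p)]
  exact (summable_mul_coeff_pow (fun v => (hg v).summable) p n).hasSum

end Composition

section Adomian

open Polynomial

/-- The polynomial `∑_{r ≤ n} v_r τ^r` that the Adomian polynomial `Aₙ` substitutes into its
nonlinearity, encoded as a truncation of the power series with coefficients `v`. -/
def truncPoly {R : Type*} [Semiring R] (n : ℕ) (v : ℕ → R) : R[X] :=
  (PowerSeries.mk v).trunc (n + 1)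

lemma coeff_truncPoly {R : Type*} [Semiring R] (n : ℕ) (v : ℕ → R) (m : ℕ) :
    (truncPoly n v).coeff m = if m ≤ n then v m else 0 := by
  simp [truncPoly, PowerSeries.coeff_trunc]

lemma eval_truncPoly {R : Type*} [Semiring R] (n : ℕ) (v : ℕ → R) (t : R) :
    (truncPoly n v).eval t = ∑ r ∈ Finset.range (n + 1), v r * t ^ r := by
  simp [truncPoly, eval, PowerSeries.eval₂_trunc_eq_sum_range]

section Majorization

variable {R : Type*} [CommRing R] [LinearOrder R] {n : ℕ} {u v ρ : ℕ → R}

lemma majorizedBy_truncPoly (hu : ∀ r ≤ n, |u r| ≤ ρ r) :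
    MajorizedBy (truncPoly n u) (truncPoly n ρ) := fun m => by
  rw [coeff_truncPoly, coeff_truncPoly]
  split_ifs with hm
  · exact hu m hm
  · simp [abs]

lemma majorizedBy_truncPoly_sub {h : R} (huv : ∀ r ≤ n, |u r - v r| ≤ h * ρ r) :
    MajorizedBy (truncPoly n u - truncPoly n v) (C h * truncPoly n ρ) := fun m => by
  rw [coeff_sub, coeff_C_mul, coeff_truncPoly, coeff_truncPoly, coeff_truncPoly]
  split_ifs with hm
  · exact huv m hm
  · simp [abs]

end Majorization

lemma hasSum_adomian {a : ℕ → ℝ} {g : ℝ → ℝ} (hg : ∀ v, HasSum (fun k => a k * v ^ k) (g v))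
    (n : ℕ) (v : ℕ → ℝ) :
    HasSum (fun k => a k * (truncPoly n v ^ k).coeff n) (adomian g n v) := by
  simpa only [adomian, eval_truncPoly, div_eq_inv_mul] using
    hasSum_mul_coeff_pow hg (truncPoly n v) n

lemma abs_adomian_sub_adomian_le {a : ℕ → ℝ} {g gAbs : ℝ → ℝ}
    (hg : ∀ v, HasSum (fun k => a k * v ^ k) (g v))
    (hgAbs : ∀ v, HasSum (fun k => |a k| * v ^ k) (gAbs v))
    {n : ℕ} {u v ρ : ℕ → ℝ} {h : ℝ} (hu : ∀ r ≤ n, |u r| ≤ ρ r) (hv : ∀ r ≤ n, |v r| ≤ ρ r)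
    (huv : ∀ r ≤ n, |u r - v r| ≤ h * ρ r) :
    |adomian g n u - adomian g n v| ≤ h * adomian (fun z => deriv gAbs z * z) n ρ := by
  have hdiff := (hasSum_adomian hg n u).sub (hasSum_adomian hg n v)
  have hbound := (hasSum_adomian (hasSum_deriv_mul_self hgAbs) n ρ).mul_left h
  rw [← hdiff.tsum_eq, ← Real.norm_eq_abs]
  refine tsum_of_norm_bounded hbound fun k => ?_
  have hcoeff := (majorizedBy_truncPoly hu).abs_coeff_pow_sub_coeff_pow_le
    (majorizedBy_truncPoly hv) (majorizedBy_truncPoly_sub huv) k n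
  calc ‖a k * (truncPoly n u ^ k).coeff n - a k * (truncPoly n v ^ k).coeff n‖
      = |a k| * |(truncPoly n u ^ k).coeff n - (truncPoly n v ^ k).coeff n| := by
        rw [← mul_sub, Real.norm_eq_abs, abs_mul]
    _ ≤ |a k| * (h * (k * (truncPoly n ρ ^ k).coeff n)) := by gcongr
    _ = h * (k * |a k| * (truncPoly n ρ ^ k).coeff n) := by ring

end Adomian

section MeanValue

variable {𝕜 E : Type*} [RCLike 𝕜] [NormedAddCommGroup E] [NormedSpace 𝕜 E]
  {s t : Set 𝕜} {g : 𝕜 × 𝕜 → E} {Mx My : ℝ}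

lemma norm_sub_le_of_norm_partialDeriv_le (hs : Convex ℝ s) (ht : Convex ℝ t)
    (hdx : ∀ p ∈ s ×ˢ t, DifferentiableAt 𝕜 (fun x => g (x, p.2)) p.1)
    (hdy : ∀ p ∈ s ×ˢ t, DifferentiableAt 𝕜 (fun y => g (p.1, y)) p.2)
    (hbx : ∀ p ∈ s ×ˢ t, ‖deriv (fun x => g (x, p.2)) p.1‖ ≤ Mx)
    (hby : ∀ p ∈ s ×ˢ t, ‖deriv (fun y => g (p.1, y)) p.2‖ ≤ My)
    {p q : 𝕜 × 𝕜} (hp : p ∈ s ×ˢ t) (hq : q ∈ s ×ˢ t) :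
    ‖g p - g q‖ ≤ Mx * ‖p.1 - q.1‖ + My * ‖p.2 - q.2‖ := by
  have hhorizontal : ‖g (p.1, p.2) - g (q.1, p.2)‖ ≤ Mx * ‖p.1 - q.1‖ :=
    hs.norm_image_sub_le_of_norm_deriv_le (f := fun x => g (x, p.2))
      (fun x hx => hdx (x, p.2) ⟨hx, hp.2⟩) (fun x hx => hbx (x, p.2) ⟨hx, hp.2⟩) hq.1 hp.1
  have hvertical : ‖g (q.1, p.2) - g (q.1, q.2)‖ ≤ My * ‖p.2 - q.2‖ :=
    ht.norm_image_sub_le_of_norm_deriv_le (f := fun y => g (q.1, y))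
      (fun y hy => hdy (q.1, y) ⟨hq.1, hy⟩) (fun y hy => hby (q.1, y) ⟨hq.1, hy⟩) hq.2 hp.2
  exact (norm_sub_le_norm_sub_add_norm_sub _ _ _).trans (add_le_add hhorizontal hvertical)

lemma norm_sub_le_of_norm_partialDeriv_le_of_mem_closure (hs : Convex ℝ s) (ht : Convex ℝ t)
    (hg : ContinuousOn g (closure (s ×ˢ t)))
    (hdx : ∀ p ∈ s ×ˢ t, DifferentiableAt 𝕜 (fun x => g (x, p.2)) p.1)
    (hdy : ∀ p ∈ s ×ˢ t, DifferentiableAt 𝕜 (fun y => g (p.1, y)) p.2)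
    (hbx : ∀ p ∈ s ×ˢ t, ‖deriv (fun x => g (x, p.2)) p.1‖ ≤ Mx)
    (hby : ∀ p ∈ s ×ˢ t, ‖deriv (fun y => g (p.1, y)) p.2‖ ≤ My)
    {p q : 𝕜 × 𝕜} (hp : p ∈ closure (s ×ˢ t)) (hq : q ∈ closure (s ×ˢ t)) :
    ‖g p - g q‖ ≤ Mx * ‖p.1 - q.1‖ + My * ‖p.2 - q.2‖ := by
  have hclosure : closure ((s ×ˢ t) ×ˢ (s ×ˢ t)) = closure (s ×ˢ t) ×ˢ closure (s ×ˢ t) :=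
    closure_prod_eq
  refine le_on_closure (f := fun z : (𝕜 × 𝕜) × (𝕜 × 𝕜) => ‖g z.1 - g z.2‖)
    (g := fun z => Mx * ‖z.1.1 - z.2.1‖ + My * ‖z.1.2 - z.2.2‖)
    (s := (s ×ˢ t) ×ˢ (s ×ˢ t)) (x := (p, q)) ?_ ?_ (by fun_prop) ?_
  · exact fun z hz => norm_sub_le_of_norm_partialDeriv_le hs ht hdx hdy hbx hby hz.1 hz.2
  · rw [hclosure]
    exact ((hg.comp continuousOn_fst fun z hz => hz.1).sub
      (hg.comp continuousOn_snd fun z hz => hz.2)).norm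
  · rw [hclosure]
    exact ⟨hp, hq⟩

end MeanValue

section Supremum

variable {α ι : Type*} [ConditionallyCompleteLattice α]

lemma le_biSup_of_bddAbove_image {f : ι → α} {s : Set ι} (hf : BddAbove (f '' s)) {i : ι}
    (hi : i ∈ s) : f i ≤ ⨆ j ∈ s, f j :=
  le_ciSup₂ (f := fun j _ => f j)
    (hf.mono <| iUnion_subset fun _ => range_subset_iff.mpr fun hj => mem_image_of_mem f hj) i hi

lemma le_biSup_finset [Nonempty α] (f : ι → α) {s : Finset ι} {i : ι} (hi : i ∈ s) :
    f i ≤ ⨆ j ∈ s, f j :=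
  le_biSup_of_bddAbove_image (s := (s : Set ι)) (s.finite_toSet.image f).bddAbove hi

end Supremum

section Mesh

lemma meshInterval_subset_Icc {X : ℝ} (hX : 0 ≤ X) {N i : ℕ} (hi : i ∈ Finset.Icc 1 N) :
    Icc (((i : ℝ) - 1) * (X / N)) (i * (X / N)) ⊆ Icc 0 X := by
  obtain ⟨h1i, hiN⟩ := Finset.mem_Icc.mp hi
  have hN : (N : ℝ) ≠ 0 := Nat.cast_ne_zero.mpr (by lia)
  refine Icc_subset_Icc (mul_nonneg (sub_nonneg.mpr (by exact_mod_cast h1i)) (by positivity)) ?_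
  calc (i : ℝ) * (X / N) ≤ N * (X / N) := by gcongr
    _ = X := mul_div_cancel₀ X hN

lemma exists_meshInterval_mem {X : ℝ} (hX : 0 < X) {N : ℕ} (hN : 1 ≤ N) {x : ℝ}
    (hx : x ∈ Icc 0 X) :
    ∃ i ∈ Finset.Icc 1 N, x ∈ Icc (((i : ℝ) - 1) * (X / N)) (i * (X / N)) ∧
      X / N * (min (N - 1) ⌊x / (X / N)⌋₊ : ℕ) = ((i : ℝ) - 1) * (X / N) := by
  have hstep : 0 < X / N := by positivity
  set k := min (N - 1) ⌊x / (X / N)⌋₊ with hk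
  have hlower : k * (X / N) ≤ x := by
    rw [← le_div_iff₀ hstep]
    exact (Nat.cast_le.mpr (min_le_right _ _)).trans (Nat.floor_le (div_nonneg hx.1 hstep.le))
  have hupper : x ≤ (k + 1 : ℕ) * (X / N) := by
    rcases min_choice (N - 1) ⌊x / (X / N)⌋₊ with hlast | hfloor
    · rw [hk, hlast, Nat.sub_add_cancel hN, mul_div_cancel₀ X (by positivity)]
      exact hx.2
    · rw [hk, hfloor, ← div_le_iff₀ hstep]
      exact_mod_cast (Nat.lt_floor_add_one _).le
  refine ⟨k + 1, Finset.mem_Icc.mpr ⟨by omega, by omega⟩, ⟨?_, hupper⟩, ?_⟩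
  · simpa using hlower
  · push_cast
    ring

variable {X Y : ℝ} {N₁ N₂ i j : ℕ}

lemma cellCl_subset_clD (hX : 0 ≤ X) (hY : 0 ≤ Y) (hi : i ∈ Finset.Icc 1 N₁)
    (hj : j ∈ Finset.Icc 1 N₂) : cellCl X Y N₁ N₂ i j ⊆ clD X Y :=
  prod_mono (meshInterval_subset_Icc hX hi) (meshInterval_subset_Icc hY hj)

lemma meshNode_mem_cellCl (hX : 0 ≤ X) (hY : 0 ≤ Y) :
    meshNode X Y N₁ N₂ i j ∈ cellCl X Y N₁ N₂ i j :=
  ⟨left_mem_Icc.mpr (by gcongr; linarith), left_mem_Icc.mpr (by gcongr; linarith)⟩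

lemma closure_cellOp (hX : 0 < X) (hY : 0 < Y) (hN₁ : 1 ≤ N₁) (hN₂ : 1 ≤ N₂) :
    closure (cellOp X Y N₁ N₂ i j) = cellCl X Y N₁ N₂ i j := by
  have hx : ((i : ℝ) - 1) * (X / N₁) < i * (X / N₁) := by
    have : 0 < X / N₁ := by positivity
    linarith
  have hy : ((j : ℝ) - 1) * (Y / N₂) < j * (Y / N₂) := by
    have : 0 < Y / N₂ := by positivity
    linarith
  rw [cellOp, closure_prod_eq, closure_Ioo hx.ne, closure_Ioo hy.ne, cellCl]

lemma exists_sampling_eq_meshNode (hX : 0 < X) (hY : 0 < Y) (hN₁ : 1 ≤ N₁) (hN₂ : 1 ≤ N₂)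
    {p : ℝ × ℝ} (hp : p ∈ clD X Y) :
    ∃ i ∈ Finset.Icc 1 N₁, ∃ j ∈ Finset.Icc 1 N₂, p ∈ cellCl X Y N₁ N₂ i j ∧
      ∀ w, sampling X Y N₁ N₂ w p = w (meshNode X Y N₁ N₂ i j) := by
  obtain ⟨i, hi, hxi, hnodex⟩ := exists_meshInterval_mem hX hN₁ hp.1
  obtain ⟨j, hj, hyj, hnodey⟩ := exists_meshInterval_mem hY hN₂ hp.2
  refine ⟨i, hi, j, hj, ⟨hxi, hyj⟩, fun w => ?_⟩
  rw [sampling, hnodex, hnodey, meshNode]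

variable {g : ℝ × ℝ → ℝ} {p q : ℝ × ℝ}

lemma abs_le_norm1 (hg : ContinuousOn g (clD X Y)) (hp : p ∈ clD X Y) :
    |g p| ≤ norm1 X Y N₁ N₂ g := by
  have hcompact : IsCompact (clD X Y) := isCompact_Icc.prod isCompact_Icc
  exact (le_biSup_of_bddAbove_image (f := fun p => |g p|) (hcompact.bddAbove_image hg.abs) hp).trans
    (le_max_left _ _)

lemma sqrt_biSup_sq_add_biSup_sq_le_norm1 (hi : i ∈ Finset.Icc 1 N₁) (hj : j ∈ Finset.Icc 1 N₂) :
    √((⨆ p ∈ cellOp X Y N₁ N₂ i j, |pdx g p|) ^ 2 +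
      (⨆ p ∈ cellOp X Y N₁ N₂ i j, |pdy g p|) ^ 2) ≤ norm1 X Y N₁ N₂ g :=
  ((le_biSup_finset _ hj).trans (le_biSup_finset (fun i => ⨆ j ∈ Finset.Icc 1 N₂,
    √((⨆ p ∈ cellOp X Y N₁ N₂ i j, |pdx g p|) ^ 2 +
      (⨆ p ∈ cellOp X Y N₁ N₂ i j, |pdy g p|) ^ 2)) hi)).trans (le_max_right _ _)

lemma abs_sub_le_meshH_mul_norm1 (hX : 0 < X) (hY : 0 < Y)
    (hi : i ∈ Finset.Icc 1 N₁) (hj : j ∈ Finset.Icc 1 N₂)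
    (hg : ContinuousOn g (cellCl X Y N₁ N₂ i j))
    (hdx : ∀ p ∈ cellOp X Y N₁ N₂ i j, DifferentiableAt ℝ (fun t => g (t, p.2)) p.1)
    (hdy : ∀ p ∈ cellOp X Y N₁ N₂ i j, DifferentiableAt ℝ (fun t => g (p.1, t)) p.2)
    (hbx : BddAbove ((fun p => |pdx g p|) '' cellOp X Y N₁ N₂ i j))
    (hby : BddAbove ((fun p => |pdy g p|) '' cellOp X Y N₁ N₂ i j))
    (hp : p ∈ cellCl X Y N₁ N₂ i j) (hq : q ∈ cellCl X Y N₁ N₂ i j) :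
    |g p - g q| ≤ meshH X Y N₁ N₂ * norm1 X Y N₁ N₂ g := by
  set Mx := ⨆ p ∈ cellOp X Y N₁ N₂ i j, |pdx g p|
  set My := ⨆ p ∈ cellOp X Y N₁ N₂ i j, |pdy g p|
  have hMx : 0 ≤ Mx := Real.iSup_nonneg fun _ => Real.iSup_nonneg fun _ => abs_nonneg _
  have hMy : 0 ≤ My := Real.iSup_nonneg fun _ => Real.iSup_nonneg fun _ => abs_nonneg _
  have hxdist : |p.1 - q.1| ≤ X / N₁ := (Real.dist_le_of_mem_Icc hp.1 hq.1).trans_eq (by ring)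
  have hydist : |p.2 - q.2| ≤ Y / N₂ := (Real.dist_le_of_mem_Icc hp.2 hq.2).trans_eq (by ring)
  rw [← closure_cellOp hX hY (by grind) (by grind)] at hg hp hq
  calc |g p - g q|
      ≤ Mx * |p.1 - q.1| + My * |p.2 - q.2| :=
        norm_sub_le_of_norm_partialDeriv_le_of_mem_closure (convex_Ioo _ _) (convex_Ioo _ _) hg hdx
          hdy (fun _ hz => le_biSup_of_bddAbove_image hbx hz)
          (fun _ hz => le_biSup_of_bddAbove_image hby hz) hp hq
    _ ≤ X / N₁ * Mx + Y / N₂ * My := by rw [mul_comm Mx, mul_comm My]; gcongr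
    _ ≤ meshH X Y N₁ N₂ * √(Mx ^ 2 + My ^ 2) := by
        simpa [meshH] using
          Real.sum_mul_le_sqrt_mul_sqrt Finset.univ ![X / N₁, Y / N₂] ![Mx, My]
    _ ≤ meshH X Y N₁ N₂ * norm1 X Y N₁ N₂ g :=
        mul_le_mul_of_nonneg_left (sqrt_biSup_sq_add_biSup_sq_le_norm1 hi hj) (Real.sqrt_nonneg _)

end Mesh

theorem adomian_sampling_estimate_general (X Y : ℝ) (hX : 0 < X) (hY : 0 < Y)
    (N₁ N₂ : ℕ) (hN₁ : 1 ≤ N₁) (hN₂ : 1 ≤ N₂)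
    (ν : ℕ → ℝ) (N Ntil : ℝ → ℝ)
    (hN : ∀ v : ℝ, HasSum (fun s : ℕ => ν s * v ^ s) (N v))
    (hNtil : ∀ v : ℝ, HasSum (fun s : ℕ => |ν s| * v ^ s) (Ntil v))
    (s : ℕ) (w : ℕ → ℝ × ℝ → ℝ)
    (hwc : ∀ r ≤ s, ContinuousOn (w r) (clD X Y))
    (hwdx : ∀ r ≤ s, ∀ i ∈ Finset.Icc 1 N₁, ∀ j ∈ Finset.Icc 1 N₂,
      ∀ p ∈ cellOp X Y N₁ N₂ i j, DifferentiableAt ℝ (fun t => w r (t, p.2)) p.1)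
    (hwdy : ∀ r ≤ s, ∀ i ∈ Finset.Icc 1 N₁, ∀ j ∈ Finset.Icc 1 N₂,
      ∀ p ∈ cellOp X Y N₁ N₂ i j, DifferentiableAt ℝ (fun t => w r (p.1, t)) p.2)
    (hwbx : ∀ r ≤ s, ∀ i ∈ Finset.Icc 1 N₁, ∀ j ∈ Finset.Icc 1 N₂,
      BddAbove ((fun p => |pdx (w r) p|) '' cellOp X Y N₁ N₂ i j))
    (hwby : ∀ r ≤ s, ∀ i ∈ Finset.Icc 1 N₁, ∀ j ∈ Finset.Icc 1 N₂,
      BddAbove ((fun p => |pdy (w r) p|) '' cellOp X Y N₁ N₂ i j)) :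
    ∀ p ∈ clD X Y,
      |adomian N s (fun r => sampling X Y N₁ N₂ (w r) p) -
          adomian N s (fun r => w r p)| ≤
        meshH X Y N₁ N₂ *
          adomian (fun v => deriv Ntil v * v) s (fun r => norm1 X Y N₁ N₂ (w r)) := by
  intro p hp
  obtain ⟨i, hi, j, hj, hpcell, hsampling⟩ := exists_sampling_eq_meshNode hX hY hN₁ hN₂ hp
  have hcell : cellCl X Y N₁ N₂ i j ⊆ clD X Y := cellCl_subset_clD hX.le hY.le hi hj
  have hnode : meshNode X Y N₁ N₂ i j ∈ cellCl X Y N₁ N₂ i j := meshNode_mem_cellCl hX.le hY.le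
  simp only [hsampling]
  exact abs_adomian_sub_adomian_le hN hNtil
    (fun r hr => abs_le_norm1 (hwc r hr) (hcell hnode))
    (fun r hr => abs_le_norm1 (hwc r hr) hp)
    (fun r hr => abs_sub_le_meshH_mul_norm1 hX hY hi hj ((hwc r hr).mono hcell)
      (hwdx r hr i hi j hj) (hwdy r hr i hi j hj) (hwbx r hr i hi j hj) (hwby r hr i hi j hj)
      hnode hpcell)

/-- Lipschitz-type estimate for Adomian polynomials under lower-left
sampling: for continuous functions `w₀,…,w_s` on `D̄`, continuously differentiable with
bounded first partials on each open mesh cell,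
`|A_s(N; w₀,⊥,…,w_s,⊥) − A_s(N; w₀,…,w_s)| ≤ h·A_s(Ñ₁; ‖w₀‖₁,…,‖w_s‖₁)` on `D̄`,
where `Ñ₁(u) = Ñ′(u)·u` and `Ñ(u) = Σ |ν_s| u^s`. -/
theorem adomian_sampling_estimate (X Y : ℝ) (hX : 0 < X) (hY : 0 < Y)
    (N₁ N₂ : ℕ) (hN₁ : 1 ≤ N₁) (hN₂ : 1 ≤ N₂)
    (ν : ℕ → ℝ) (N Ntil : ℝ → ℝ)
    (hN : ∀ v : ℝ, HasSum (fun s : ℕ => ν s * v ^ s) (N v))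
    (hNtil : ∀ v : ℝ, HasSum (fun s : ℕ => |ν s| * v ^ s) (Ntil v))
    (s : ℕ) (w : ℕ → ℝ × ℝ → ℝ)
    (hwc : ∀ r ≤ s, ContinuousOn (w r) (clD X Y))
    (hwdx : ∀ r ≤ s, ∀ i ∈ Finset.Icc 1 N₁, ∀ j ∈ Finset.Icc 1 N₂,
      ∀ p ∈ cellOp X Y N₁ N₂ i j, DifferentiableAt ℝ (fun t => w r (t, p.2)) p.1)
    (hwdy : ∀ r ≤ s, ∀ i ∈ Finset.Icc 1 N₁, ∀ j ∈ Finset.Icc 1 N₂,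
      ∀ p ∈ cellOp X Y N₁ N₂ i j, DifferentiableAt ℝ (fun t => w r (p.1, t)) p.2)
    (hwcx : ∀ r ≤ s, ∀ i ∈ Finset.Icc 1 N₁, ∀ j ∈ Finset.Icc 1 N₂,
      ContinuousOn (pdx (w r)) (cellOp X Y N₁ N₂ i j))
    (hwcy : ∀ r ≤ s, ∀ i ∈ Finset.Icc 1 N₁, ∀ j ∈ Finset.Icc 1 N₂,
      ContinuousOn (pdy (w r)) (cellOp X Y N₁ N₂ i j))
    (hwbx : ∀ r ≤ s, ∀ i ∈ Finset.Icc 1 N₁, ∀ j ∈ Finset.Icc 1 N₂,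
      BddAbove ((fun p => |pdx (w r) p|) '' cellOp X Y N₁ N₂ i j))
    (hwby : ∀ r ≤ s, ∀ i ∈ Finset.Icc 1 N₁, ∀ j ∈ Finset.Icc 1 N₂,
      BddAbove ((fun p => |pdy (w r) p|) '' cellOp X Y N₁ N₂ i j)) :
    ∀ p ∈ clD X Y,
      |adomian N s (fun r => sampling X Y N₁ N₂ (w r) p) -
          adomian N s (fun r => w r p)| ≤
        meshH X Y N₁ N₂ *
          adomian (fun v => deriv Ntil v * v) s (fun r => norm1 X Y N₁ N₂ (w r)) := by
  exact adomian_sampling_estimate_general X Y hX hY N₁ N₂ hN₁ hN₂ ν N Ntil hN hNtil s w hwc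
    hwdx hwdy hwbx hwby
end
end

section
/- Let u solve the Goursat problem, with ∂u/∂x extending continuously to (0,X) × [0,Y) and ∂u/∂y extending continuously to [0,X) × (0,Y). Then for every (x,y) ∈ D: ∂u/∂x(x,y) = ψ′(x) + ∫₀^y [f(x,η) − N(u(x,η))·u(x,η)] dη and ∂u/∂y(x,y) = φ′(y) + ∫₀^x [f(ξ,y) − N(u(ξ,y))·u(ξ,y)] dξ. -/
open Set

noncomputable section

/-- `u` solves the Goursat problem `∂²u/∂x∂y + N(u)·u = f` on `D`,
`u(x,0) = ψ(x)`, `u(0,y) = φ(y)`, with the regularity stated in the paper. -/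
structure GoursatSol (X Y : ℝ) (N : ℝ → ℝ) (f : ℝ × ℝ → ℝ) (ψ φ : ℝ → ℝ)
    (u : ℝ × ℝ → ℝ) : Prop where
  cont : ContinuousOn u (clD X Y)
  diffx : ∀ p ∈ opD X Y, DifferentiableAt ℝ (fun t => u (t, p.2)) p.1
  diffy : ∀ p ∈ opD X Y, DifferentiableAt ℝ (fun t => u (p.1, t)) p.2
  diffxy : ∀ p ∈ opD X Y, DifferentiableAt ℝ (fun t => pdx u (p.1, t)) p.2
  contx : ContinuousOn (pdx u) (opD X Y)
  conty : ContinuousOn (pdy u) (opD X Y)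
  contxy : ContinuousOn (pdxy u) (opD X Y)
  eqn : ∀ p ∈ opD X Y, pdxy u p + N (u p) * u p = f p
  bc1 : ∀ x ∈ Icc (0 : ℝ) X, u (x, 0) = ψ x
  bc2 : ∀ y ∈ Icc (0 : ℝ) Y, u (0, y) = φ y

/-- Mixed partial derivative `∂²u/∂y∂x` (derivative in `x` of the derivative in `y`). -/
def pdyx (u : ℝ × ℝ → ℝ) (p : ℝ × ℝ) : ℝ := pdx (pdy u) p

/-!
Put `g = f - N(u) u`, which is continuous on `D̄`. Integrating `∂²u/∂x∂y = g` first in `y` and then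
in `x` expresses the second-order increments of `u` over rectangles inside `D` as double integrals
of `g`. As `u` is continuous on `D̄`, this persists up to the boundary, where `u` is given by `ψ`
and `φ`. Interchanging the integrals where necessary, one sees that `u(x,y) - φ(y)` is, for fixed
`x`, a primitive in `y` of the continuous function `∫₀^x g(ξ,y) dξ`, and that `u(x,y) - ψ(x)` is,
for fixed `y`, a primitive in `x` of `∫₀^y g(x,η) dη`.
-/

open Filter Function MeasureTheory Topology

theorem continuous_of_forall_hasSum_mul_pow {𝕜 : Type*} [RCLike 𝕜] {ν : ℕ → 𝕜} {N : 𝕜 → 𝕜}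
    (hN : ∀ v : 𝕜, HasSum (fun s : ℕ => ν s * v ^ s) (N v)) : Continuous N := by
  set p := FormalMultilinearSeries.ofScalars 𝕜 ν with hp
  have hsum : p.sum = N := by
    funext v
    exact (FormalMultilinearSeries.ofScalars_sum_eq ν v).trans (hN v).tsum_eq
  have hradius : p.radius = ⊤ := by
    refine ENNReal.eq_top_of_forall_nnreal_le fun r => ?_
    refine p.le_radius_of_tendsto (l := 0) ?_
    simpa [hp, FormalMultilinearSeries.ofScalars_norm] using
      (hN ((r : ℝ) : 𝕜)).summable.tendsto_atTop_zero.norm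
  have hcont := p.continuousOn
  rwa [hsum, hradius, Metric.eball_top, continuousOn_univ] at hcont

section ParametricIntegral

variable {E : Type*} [NormedAddCommGroup E] [NormedSpace ℝ E]

theorem continuousOn_intervalIntegral_of_continuousOn_prod {α : Type*} [TopologicalSpace α]
    [FirstCountableTopology α] {g : α → ℝ → E} {s : Set α} {c d : ℝ} (hcd : c ≤ d)
    (hg : ContinuousOn (uncurry g) (s ×ˢ Icc c d)) :
    ContinuousOn (fun x => ∫ y in c..d, g x y) s := by
  rw [continuousOn_iff_continuous_domRestrict]
  have hext : Continuous (uncurry fun (x : s) y => g x (projIcc c d hcd y)) :=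
    hg.comp_continuous (f := fun q : s × ℝ => ((q.1 : α), (projIcc c d hcd q.2 : ℝ)))
      (by fun_prop) fun q => ⟨q.1.2, (projIcc c d hcd q.2).2⟩
  refine (intervalIntegral.continuous_parametric_intervalIntegral_of_continuous'
    (μ := volume) hext c d).congr fun x => intervalIntegral.integral_congr fun y hy => ?_
  rw [uIcc_of_le hcd] at hy
  simp only [projIcc_of_mem hcd hy]

theorem hasDerivAt_intervalIntegral_of_continuousOn [CompleteSpace E] {h : ℝ → E} {a b x : ℝ}
    (hh : ContinuousOn h (Icc a b)) (hx : x ∈ Ioo a b) :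
    HasDerivAt (fun t => ∫ s in a..t, h s) (h x) x := by
  have hnhds : Icc a b ∈ 𝓝 x := Icc_mem_nhds hx.1 hx.2
  exact intervalIntegral.integral_hasDerivAt_right
    ((hh.mono (Icc_subset_Icc_right hx.2.le)).intervalIntegrable_of_Icc hx.1.le)
    (hh.stronglyMeasurableAtFilter_nhdsWithin measurableSet_Icc x |>.filter_mono
      (by rw [nhdsWithin_eq_nhds.2 hnhds]))
    (hh.continuousAt hnhds)

theorem intervalIntegral_swap_of_continuousOn {g : ℝ → ℝ → E} {a b c d : ℝ} (hab : a ≤ b)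
    (hcd : c ≤ d) (hg : ContinuousOn (uncurry g) (Icc a b ×ˢ Icc c d)) :
    ∫ x in a..b, ∫ y in c..d, g x y = ∫ y in c..d, ∫ x in a..b, g x y := by
  refine intervalIntegral_intervalIntegral_swap ?_
  rw [uIoc_of_le hab, uIoc_of_le hcd]
  exact (hg.integrableOn_compact (isCompact_Icc.prod isCompact_Icc)).mono_set
    (prod_mono Ioc_subset_Icc_self Ioc_subset_Icc_self)

end ParametricIntegral

section MixedDerivative

variable {E : Type*} [NormedAddCommGroup E] [NormedSpace ℝ E]
  {u v g : ℝ → ℝ → E} {a b c d a' b' c' d' : ℝ}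

/-- `u` is continuous on the rectangle `[a,b] × [c,d]` and satisfies `∂u/∂x = v` and `∂v/∂y = g` in
its interior, with `g` continuous up to the boundary. This is the form in which a solution of
`∂²u/∂x∂y = g` is integrated over rectangles. -/
structure HasMixedDerivOnRect (u v g : ℝ → ℝ → E) (a b c d : ℝ) : Prop where
  continuousOn : ContinuousOn (uncurry u) (Icc a b ×ˢ Icc c d)
  continuousOn_mixed : ContinuousOn (uncurry g) (Icc a b ×ˢ Icc c d)
  hasDerivAt_fst : ∀ x ∈ Ioo a b, ∀ y ∈ Ioo c d, HasDerivAt (fun t => u t y) (v x y) x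
  hasDerivAt_fst_snd : ∀ x ∈ Ioo a b, ∀ y ∈ Ioo c d, HasDerivAt (fun t => v x t) (g x y) y

namespace HasMixedDerivOnRect

theorem mono (h : HasMixedDerivOnRect u v g a b c d) (ha : a ≤ a') (hb : b' ≤ b) (hc : c ≤ c')
    (hd : d' ≤ d) : HasMixedDerivOnRect u v g a' b' c' d' where
  continuousOn := h.continuousOn.mono (prod_mono (Icc_subset_Icc ha hb) (Icc_subset_Icc hc hd))
  continuousOn_mixed :=
    h.continuousOn_mixed.mono (prod_mono (Icc_subset_Icc ha hb) (Icc_subset_Icc hc hd))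
  hasDerivAt_fst x hx y hy :=
    h.hasDerivAt_fst x (Ioo_subset_Ioo ha hb hx) y (Ioo_subset_Ioo hc hd hy)
  hasDerivAt_fst_snd x hx y hy :=
    h.hasDerivAt_fst_snd x (Ioo_subset_Ioo ha hb hx) y (Ioo_subset_Ioo hc hd hy)

theorem continuousOn_integral_fst (h : HasMixedDerivOnRect u v g a b c d) (hab : a ≤ b) :
    ContinuousOn (fun y => ∫ x in a..b, g x y) (Icc c d) :=
  continuousOn_intervalIntegral_of_continuousOn_prod hab <|
    h.continuousOn_mixed.comp continuous_swap.continuousOn fun _ hq => hq.symm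

theorem continuousOn_integral_snd (h : HasMixedDerivOnRect u v g a b c d) (hcd : c ≤ d) :
    ContinuousOn (fun x => ∫ y in c..d, g x y) (Icc a b) :=
  continuousOn_intervalIntegral_of_continuousOn_prod hcd h.continuousOn_mixed

variable [CompleteSpace E]

theorem integral_snd_eq_sub (h : HasMixedDerivOnRect u v g a b c d) {x : ℝ} (hx : x ∈ Ioo a b)
    (hc : c < c') (hcd : c' ≤ d') (hd : d' < d) :
    ∫ y in c'..d', g x y = v x d' - v x c' := by
  have hsub : Icc c' d' ⊆ Ioo c d := Icc_subset_Ioo hc hd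
  have hg : ContinuousOn (g x) (Icc c' d') :=
    (h.continuousOn_mixed.uncurry_left x (Ioo_subset_Icc_self hx)).mono
      (hsub.trans Ioo_subset_Icc_self)
  refine intervalIntegral.integral_eq_sub_of_hasDerivAt (fun y hy => ?_)
    (hg.intervalIntegrable_of_Icc hcd)
  rw [uIcc_of_le hcd] at hy
  exact h.hasDerivAt_fst_snd x hx y (hsub hy)

theorem integral_integral_eq_sub_of_lt (h : HasMixedDerivOnRect u v g a b c d) (hab : a ≤ b)
    (hc : c < c') (hcd : c' ≤ d') (hd : d' < d) :
    ∫ x in a..b, ∫ y in c'..d', g x y = (u b d' - u b c') - (u a d' - u a c') := by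
  have hc' : c' ∈ Ioo c d := ⟨hc, hcd.trans_lt hd⟩
  have hd' : d' ∈ Ioo c d := ⟨hc.trans_le hcd, hd⟩
  refine intervalIntegral.integral_eq_sub_of_hasDerivAt_of_le hab
    (f := fun x => u x d' - u x c') ?_ (fun x hx => ?_) ?_
  · exact (h.continuousOn.uncurry_right d' (Ioo_subset_Icc_self hd')).sub
      (h.continuousOn.uncurry_right c' (Ioo_subset_Icc_self hc'))
  · rw [h.integral_snd_eq_sub hx hc hcd hd]
    exact (h.hasDerivAt_fst x hx d' hd').sub (h.hasDerivAt_fst x hx c' hc')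
  · have hmono := h.mono le_rfl le_rfl hc.le hd.le
    exact (hmono.continuousOn_integral_snd hcd).intervalIntegrable_of_Icc hab

theorem hasDerivAt_sub_snd (h : HasMixedDerivOnRect u v g a b c d) (hab : a ≤ b) {y : ℝ}
    (hy : y ∈ Ioo c d) :
    HasDerivAt (fun t => u b t - u a t) (∫ x in a..b, g x y) y := by
  obtain ⟨c', hc, hc'y⟩ := exists_between hy.1
  have increment_eq : ∀ t ∈ Ico c' d,
      u b t - u a t = u b c' - u a c' + ∫ s in c'..t, ∫ x in a..b, g x s := by
    intro t ht
    rw [← intervalIntegral_swap_of_continuousOn hab ht.1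
        (h.mono le_rfl le_rfl hc.le ht.2.le).continuousOn_mixed,
      h.integral_integral_eq_sub_of_lt hab hc ht.1 ht.2]
    abel
  have hcont := (h.mono le_rfl le_rfl hc.le le_rfl).continuousOn_integral_fst hab
  exact ((hasDerivAt_intervalIntegral_of_continuousOn hcont ⟨hc'y, hy.2⟩).const_add _)
    |>.congr_of_eventuallyEq <| eventually_of_mem (Ico_mem_nhds hc'y hy.2) increment_eq

theorem integral_integral_eq_sub (h : HasMixedDerivOnRect u v g a b c d) (hab : a ≤ b)
    (hcd : c ≤ d) :
    ∫ x in a..b, ∫ y in c..d, g x y = (u b d - u b c) - (u a d - u a c) := by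
  have hcont : ContinuousOn (fun y => u b y - u a y) (Icc c d) :=
    (h.continuousOn.uncurry_left b (right_mem_Icc.2 hab)).sub
      (h.continuousOn.uncurry_left a (left_mem_Icc.2 hab))
  calc ∫ x in a..b, ∫ y in c..d, g x y
      = ∫ y in c..d, ∫ x in a..b, g x y :=
        intervalIntegral_swap_of_continuousOn hab hcd h.continuousOn_mixed
    _ = (u b d - u a d) - (u b c - u a c) :=
        intervalIntegral.integral_eq_sub_of_hasDerivAt_of_le hcd hcont
          (fun _ hy => h.hasDerivAt_sub_snd hab hy)
          ((h.continuousOn_integral_fst hab).intervalIntegrable_of_Icc hcd)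
    _ = (u b d - u b c) - (u a d - u a c) := sub_sub_sub_comm _ _ _ _

theorem hasDerivAt_sub_fst (h : HasMixedDerivOnRect u v g a b c d) (hcd : c ≤ d) {x : ℝ}
    (hx : x ∈ Ioo a b) :
    HasDerivAt (fun t => u t d - u t c) (∫ y in c..d, g x y) x := by
  have increment_eq : ∀ t ∈ Icc a b,
      u t d - u t c = u a d - u a c + ∫ s in a..t, ∫ y in c..d, g s y := by
    intro t ht
    rw [(h.mono le_rfl ht.2 le_rfl le_rfl).integral_integral_eq_sub ht.1 hcd]
    abel
  have hcont := h.continuousOn_integral_snd hcd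
  exact ((hasDerivAt_intervalIntegral_of_continuousOn hcont hx).const_add _)
    |>.congr_of_eventuallyEq <| eventually_of_mem (Icc_mem_nhds hx.1 hx.2) increment_eq

end HasMixedDerivOnRect

end MixedDerivative

namespace GoursatSol

variable {X Y : ℝ} {N : ℝ → ℝ} {f : ℝ × ℝ → ℝ} {ψ φ : ℝ → ℝ} {u : ℝ × ℝ → ℝ}

theorem hasMixedDerivOnRect (hu : GoursatSol X Y N f ψ φ u) (hN : Continuous N)
    (hf : ContinuousOn f (clD X Y)) :
    HasMixedDerivOnRect (curry u) (curry (pdx u)) (curry fun p => f p - N (u p) * u p)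
      0 X 0 Y where
  continuousOn := hu.cont
  continuousOn_mixed := hf.sub ((hN.comp_continuousOn hu.cont).mul hu.cont)
  hasDerivAt_fst x hx y hy := (hu.diffx (x, y) ⟨hx, hy⟩).hasDerivAt
  hasDerivAt_fst_snd x hx y hy := by
    have hxy : (x, y) ∈ opD X Y := ⟨hx, hy⟩
    have hpde : f (x, y) - N (u (x, y)) * u (x, y) = pdxy u (x, y) :=
      (eq_sub_of_add_eq (hu.eqn _ hxy)).symm
    simp only [curry_apply, hpde]
    exact (hu.diffxy _ hxy).hasDerivAt

theorem pdx_eq_deriv_add_integral (hu : GoursatSol X Y N f ψ φ u) (hN : Continuous N)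
    (hf : ContinuousOn f (clD X Y)) {x y : ℝ} (hx : x ∈ Ioo 0 X) (hy : y ∈ Ioo 0 Y) :
    pdx u (x, y) = deriv ψ x + ∫ η in (0 : ℝ)..y, (f (x, η) - N (u (x, η)) * u (x, η)) := by
  have hdiff : HasDerivAt (fun t => u (t, y) - u (t, 0))
      (∫ η in (0 : ℝ)..y, (f (x, η) - N (u (x, η)) * u (x, η))) x :=
    ((hu.hasMixedDerivOnRect hN hf).mono le_rfl le_rfl le_rfl hy.2.le).hasDerivAt_sub_fst hy.1.le hx
  have hψ : ψ =ᶠ[𝓝 x] fun t => u (t, y) - (u (t, y) - u (t, 0)) :=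
    eventually_of_mem (Icc_mem_nhds hx.1 hx.2) fun t ht =>
      ((sub_sub_cancel _ _).trans (hu.bc1 t ht)).symm
  have hderiv := ((hu.diffx (x, y) ⟨hx, hy⟩).hasDerivAt.sub hdiff).congr_of_eventuallyEq hψ
  rw [hderiv.deriv, sub_add_cancel, pdx]

theorem pdy_eq_deriv_add_integral (hu : GoursatSol X Y N f ψ φ u) (hN : Continuous N)
    (hf : ContinuousOn f (clD X Y)) {x y : ℝ} (hx : x ∈ Ioo 0 X) (hy : y ∈ Ioo 0 Y) :
    pdy u (x, y) = deriv φ y + ∫ ξ in (0 : ℝ)..x, (f (ξ, y) - N (u (ξ, y)) * u (ξ, y)) := by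
  have hdiff : HasDerivAt (fun t => u (x, t) - u (0, t))
      (∫ ξ in (0 : ℝ)..x, (f (ξ, y) - N (u (ξ, y)) * u (ξ, y))) y :=
    ((hu.hasMixedDerivOnRect hN hf).mono le_rfl hx.2.le le_rfl le_rfl).hasDerivAt_sub_snd hx.1.le hy
  have hφ : φ =ᶠ[𝓝 y] fun t => u (x, t) - (u (x, t) - u (0, t)) :=
    eventually_of_mem (Icc_mem_nhds hy.1 hy.2) fun t ht =>
      ((sub_sub_cancel _ _).trans (hu.bc2 t ht)).symm
  have hderiv := ((hu.diffy (x, y) ⟨hx, hy⟩).hasDerivAt.sub hdiff).congr_of_eventuallyEq hφ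
  rw [hderiv.deriv, sub_add_cancel, pdy]

end GoursatSol

theorem goursat_first_derivative_formulas_general {X Y : ℝ} {N : ℝ → ℝ} (hN : Continuous N)
    {f : ℝ × ℝ → ℝ} (hf : ContinuousOn f (clD X Y)) {ψ φ : ℝ → ℝ} {u : ℝ × ℝ → ℝ}
    (hu : GoursatSol X Y N f ψ φ u) :
    ∀ p ∈ opD X Y,
      pdx u p = deriv ψ p.1 +
        ∫ η in (0 : ℝ)..p.2, (f (p.1, η) - N (u (p.1, η)) * u (p.1, η)) ∧
      pdy u p = deriv φ p.2 +
        ∫ ξ in (0 : ℝ)..p.1, (f (ξ, p.2) - N (u (ξ, p.2)) * u (ξ, p.2)) :=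
  fun _ hp => ⟨hu.pdx_eq_deriv_add_integral hN hf hp.1 hp.2,
    hu.pdy_eq_deriv_add_integral hN hf hp.1 hp.2⟩

/-- Integral formulas for the first partial derivatives of the solution
of the Goursat problem:
`∂u/∂x(x,y) = ψ′(x) + ∫₀^y [f(x,η) − N(u(x,η))u(x,η)] dη` and
`∂u/∂y(x,y) = φ′(y) + ∫₀^x [f(ξ,y) − N(u(ξ,y))u(ξ,y)] dξ`. -/
theorem goursat_first_derivative_formulas
    (X Y : ℝ) (hX : 0 < X) (hY : 0 < Y)
    (ν : ℕ → ℝ) (N : ℝ → ℝ)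
    (hN : ∀ v : ℝ, HasSum (fun s : ℕ => ν s * v ^ s) (N v))
    (f : ℝ × ℝ → ℝ) (hf : ContinuousOn f (clD X Y))
    (ψ φ : ℝ → ℝ)
    (hψc : ContinuousOn ψ (Icc 0 X))
    (hψd : ∀ x ∈ Ioo (0 : ℝ) X, DifferentiableAt ℝ ψ x)
    (hφc : ContinuousOn φ (Icc 0 Y))
    (hφd : ∀ y ∈ Ioo (0 : ℝ) Y, DifferentiableAt ℝ φ y)
    (hcomp : ψ 0 = φ 0)
    (u : ℝ × ℝ → ℝ) (hu : GoursatSol X Y N f ψ φ u)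
    (hdiffyx : ∀ p ∈ opD X Y, DifferentiableAt ℝ (fun t => pdy u (t, p.2)) p.1)
    (hcontyx : ContinuousOn (pdyx u) (opD X Y))
    (hxext : ContinuousOn (pdx u) (Ioo 0 X ×ˢ Ico 0 Y))
    (hyext : ContinuousOn (pdy u) (Ico 0 X ×ˢ Ioo 0 Y)) :
    ∀ p ∈ opD X Y,
      pdx u p = deriv ψ p.1 +
        ∫ η in (0 : ℝ)..p.2, (f (p.1, η) - N (u (p.1, η)) * u (p.1, η)) ∧
      pdy u p = deriv φ p.2 +
        ∫ ξ in (0 : ℝ)..p.1, (f (ξ, p.2) - N (u (ξ, p.2)) * u (ξ, p.2)) :=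
  goursat_first_derivative_formulas_general (continuous_of_forall_hasSum_mul_pow hN) hf hu
end
end

section
/- Let N₁, N₂ ≥ 1 be integers, h₂ > 0, Y > 0 with (N₂ − 1)·h₂ ≤ Y, let a ≥ 1 and γ, β, c ≥ 0. Let U_{i,j} ≥ 0 (i ∈ {0,…,N₁}, j ∈ {0,…,N₂}) satisfy U_{0,j} = U_{i,0} = 0 and, for all i, j ≥ 1, U_{i,j} ≤ a·U_{i−1,j} + γ·U_{i,j−1} + β·h₂·Σ_{s=1}^{j−1} U_{i,s} + c. Define μ_{i,j} by μ_{0,j} = μ_{i,0} = 0 and μ_{i,j} = a·μ_{i−1,j} + (γ + β·Y)·μ_{i,j−1} + c for i, j ≥ 1. Then U_{i,j} ≤ μ_{i,j} for all i ∈ {0,…,N₁}, j ∈ {0,…,N₂}. -/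
/-!
Sub- and supersolutions of the recurrence with history are ordered, because its right-hand side is
monotone in the earlier values. Without history, comparing `μ` with `0` shows that `μ` is
nonnegative, and comparing `μ` with its shift `μ i (j + 1)` shows that it is nondecreasing in `j`.
Hence the history term of `μ` is at most `β * h₂ * (j - 1) * μ i (j - 1) ≤ β * Y * μ i (j - 1)`, so
that `μ` is a supersolution of the recurrence with history, of which `U` is a subsolution.
-/

open Finset

section HistoryRecurrence

variable {R : Type*} [Semiring R]

/-- The right-hand side at `(i + 1, j + 1)` of the recurrence
`U i j = a * U (i - 1) j + γ * U i (j - 1) + κ * ∑ s ∈ Icc 1 (j - 1), U i s + c`. The indices are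
shifted by one to avoid truncated subtraction; `κ = 0` gives the recurrence without history. -/
def historyStep (a γ κ c : R) (U : ℕ → ℕ → R) (i j : ℕ) : R :=
  a * U i (j + 1) + γ * U (i + 1) j + κ * ∑ s ∈ Icc 1 j, U (i + 1) s + c

theorem historyStep_zero_history (a γ c : R) (U : ℕ → ℕ → R) (i j : ℕ) :
    historyStep a γ 0 c U i j = a * U i (j + 1) + γ * U (i + 1) j + c := by
  rw [historyStep, zero_mul, add_zero]

variable [PartialOrder R] [IsOrderedRing R] {a b γ κ c : R}

theorem historyStep_le_historyStep (ha : 0 ≤ a) (hγ : 0 ≤ γ) (hκ : 0 ≤ κ)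
    {U V : ℕ → ℕ → R} {i j : ℕ} (h_prev : U i (j + 1) ≤ V i (j + 1))
    (h_row : ∀ s ≤ j, U (i + 1) s ≤ V (i + 1) s) :
    historyStep a γ κ c U i j ≤ historyStep a γ κ c V i j := by
  have h_sum : ∑ s ∈ Icc 1 j, U (i + 1) s ≤ ∑ s ∈ Icc 1 j, V (i + 1) s :=
    sum_le_sum fun s hs => h_row s (mem_Icc.mp hs).2
  have h_last : U (i + 1) j ≤ V (i + 1) j := h_row j le_rfl
  unfold historyStep
  gcongr

theorem le_of_le_historyStep_of_historyStep_le (ha : 0 ≤ a) (hγ : 0 ≤ γ) (hκ : 0 ≤ κ)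
    {U V : ℕ → ℕ → R} {M N : ℕ}
    (h_left : ∀ j ≤ N, U 0 j ≤ V 0 j) (h_bottom : ∀ i ≤ M, U i 0 ≤ V i 0)
    (hU : ∀ i < M, ∀ j < N, U (i + 1) (j + 1) ≤ historyStep a γ κ c U i j)
    (hV : ∀ i < M, ∀ j < N, historyStep a γ κ c V i j ≤ V (i + 1) (j + 1)) :
    ∀ i ≤ M, ∀ j ≤ N, U i j ≤ V i j := by
  intro i
  induction i with
  | zero => exact fun _ => h_left
  | succ i ih_prev =>
    intro hi j
    induction j using Nat.strong_induction_on with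
    | _ j ih_row =>
      intro hj
      cases j with
      | zero => exact h_bottom _ hi
      | succ j =>
        calc U (i + 1) (j + 1)
          _ ≤ historyStep a γ κ c U i j := hU i hi j hj
          _ ≤ historyStep a γ κ c V i j :=
              historyStep_le_historyStep ha hγ hκ (ih_prev (by omega) _ hj)
                fun s hs => ih_row s (by omega) (by omega)
          _ ≤ V (i + 1) (j + 1) := hV i hi j hj

section LinearRecurrence

variable {μ : ℕ → ℕ → R}

theorem nonneg_of_linear_recurrence (ha : 0 ≤ a) (hb : 0 ≤ b) (hc : 0 ≤ c)
    (h_left : ∀ j, 0 ≤ μ 0 j) (h_bottom : ∀ i, 0 ≤ μ i 0)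
    (h_rec : ∀ i j, μ (i + 1) (j + 1) = a * μ i (j + 1) + b * μ (i + 1) j + c) (i j : ℕ) :
    0 ≤ μ i j := by
  refine le_of_le_historyStep_of_historyStep_le (U := 0) (c := c) ha hb le_rfl
    (fun j _ => h_left j) (fun i _ => h_bottom i) ?_ ?_ i le_rfl j le_rfl
  · intro i _ j _
    simpa [historyStep_zero_history] using hc
  · intro i _ j _
    rw [historyStep_zero_history, h_rec]

theorem monotone_of_linear_recurrence (ha : 0 ≤ a) (hb : 0 ≤ b) (hc : 0 ≤ c)
    (h_left : Monotone (μ 0)) (h_bottom : ∀ i, μ i 0 = 0)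
    (h_rec : ∀ i j, μ (i + 1) (j + 1) = a * μ i (j + 1) + b * μ (i + 1) j + c) (i : ℕ) :
    Monotone (μ i) := by
  have h_nonneg : ∀ i j, 0 ≤ μ i j :=
    nonneg_of_linear_recurrence ha hb hc (fun j => (h_bottom 0).ge.trans (h_left j.zero_le))
      (fun i => (h_bottom i).ge) h_rec
  refine monotone_nat_of_le_succ fun j => ?_
  refine le_of_le_historyStep_of_historyStep_le (V := fun i j => μ i (j + 1)) (c := c)
    ha hb le_rfl ?_ ?_ ?_ ?_ i le_rfl j le_rfl
  · exact fun j _ => h_left j.le_succ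
  · intro i _
    rw [h_bottom]
    exact h_nonneg i 1
  · intro i _ j _
    rw [historyStep_zero_history, h_rec]
  · intro i _ j _
    rw [historyStep_zero_history, h_rec i (j + 1)]

end LinearRecurrence

end HistoryRecurrence

section HistoryAbsorption

variable {R : Type*} [CommSemiring R] [PartialOrder R] [IsOrderedRing R]

theorem mul_sum_Icc_le_mul_of_monotone {f : ℕ → R} (hf : Monotone f) {j : ℕ} (hfj : 0 ≤ f j)
    {h Y : R} (hh : 0 ≤ h) (hjY : j * h ≤ Y) : h * ∑ s ∈ Icc 1 j, f s ≤ Y * f j := by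
  have h_sum : ∑ s ∈ Icc 1 j, f s ≤ j * f j := by
    simpa using sum_le_card_nsmul (Icc 1 j) f (f j) fun s hs => hf (mem_Icc.mp hs).2
  calc h * ∑ s ∈ Icc 1 j, f s
    _ ≤ h * (j * f j) := by gcongr
    _ = j * h * f j := by ring
    _ ≤ Y * f j := by gcongr

theorem historyStep_le_historyStep_zero_history {a γ β c h Y : R} (hβ : 0 ≤ β) (hh : 0 ≤ h)
    {μ : ℕ → ℕ → R} {i j : ℕ} (h_mono : Monotone (μ (i + 1))) (h_nonneg : 0 ≤ μ (i + 1) j)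
    (hjY : j * h ≤ Y) :
    historyStep a γ (β * h) c μ i j ≤ historyStep a (γ + β * Y) 0 c μ i j := by
  have h_history : h * ∑ s ∈ Icc 1 j, μ (i + 1) s ≤ Y * μ (i + 1) j :=
    mul_sum_Icc_le_mul_of_monotone h_mono h_nonneg hh hjY
  calc historyStep a γ (β * h) c μ i j
    _ = a * μ i (j + 1) + γ * μ (i + 1) j + β * (h * ∑ s ∈ Icc 1 j, μ (i + 1) s) + c := by
        rw [historyStep, mul_assoc β]
    _ ≤ a * μ i (j + 1) + γ * μ (i + 1) j + β * (Y * μ (i + 1) j) + c := by gcongr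
    _ = historyStep a (γ + β * Y) 0 c μ i j := by
        rw [historyStep_zero_history]
        ring

end HistoryAbsorption

theorem discrete_comparison_general {R : Type*} [CommRing R] [PartialOrder R] [IsOrderedRing R]
    {N₁ N₂ : ℕ} {h₂ Y : R} (hh₂ : 0 ≤ h₂) (hY : 0 ≤ Y) (hN₂Y : ((N₂ : R) - 1) * h₂ ≤ Y)
    {a γ β c : R} (ha : 0 ≤ a) (hγ : 0 ≤ γ) (hβ : 0 ≤ β) (hc : 0 ≤ c) {U μ : ℕ → ℕ → R}
    (hU0 : ∀ j ≤ N₂, U 0 j ≤ 0) (hU0' : ∀ i ≤ N₁, U i 0 ≤ 0)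
    (hUrec : ∀ i j : ℕ, 1 ≤ i → i ≤ N₁ → 1 ≤ j → j ≤ N₂ →
      U i j ≤ a * U (i - 1) j + γ * U i (j - 1)
        + β * h₂ * ∑ s ∈ Icc 1 (j - 1), U i s + c)
    (hμ0 : ∀ j, μ 0 j = 0) (hμ0' : ∀ i, μ i 0 = 0)
    (hμrec : ∀ i j : ℕ, 1 ≤ i → 1 ≤ j →
      μ i j = a * μ (i - 1) j + (γ + β * Y) * μ i (j - 1) + c) :
    ∀ i ≤ N₁, ∀ j ≤ N₂, U i j ≤ μ i j := by
  have hb : 0 ≤ γ + β * Y := add_nonneg hγ (mul_nonneg hβ hY)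
  have h_rec (i j : ℕ) : μ (i + 1) (j + 1) = a * μ i (j + 1) + (γ + β * Y) * μ (i + 1) j + c :=
    hμrec (i + 1) (j + 1) (by omega) (by omega)
  have h_mono (i : ℕ) : Monotone (μ i) :=
    monotone_of_linear_recurrence ha hb hc (fun j k _ => by rw [hμ0, hμ0]) hμ0' h_rec i
  have h_nonneg (i j : ℕ) : 0 ≤ μ i j := (hμ0' i).ge.trans (h_mono i j.zero_le)
  have h_mesh (j : ℕ) (hj : j < N₂) : j * h₂ ≤ Y := by
    have hjN₂ : (j : R) ≤ N₂ - 1 := by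
      simpa [le_sub_iff_add_le] using Nat.mono_cast (α := R) (Nat.succ_le_of_lt hj)
    exact (mul_le_mul_of_nonneg_right hjN₂ hh₂).trans hN₂Y
  refine le_of_le_historyStep_of_historyStep_le (c := c) ha hγ (mul_nonneg hβ hh₂)
    (fun j hj => (hU0 j hj).trans_eq (hμ0 j).symm) (fun i hi => (hU0' i hi).trans_eq (hμ0' i).symm)
    (fun i hi j hj => hUrec (i + 1) (j + 1) (by omega) hi (by omega) hj) fun i _ j hj => ?_
  calc historyStep a γ (β * h₂) c μ i j
    _ ≤ historyStep a (γ + β * Y) 0 c μ i j :=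
        historyStep_le_historyStep_zero_history hβ hh₂ (h_mono _) (h_nonneg _ _) (h_mesh j hj)
    _ = μ (i + 1) (j + 1) := by rw [historyStep_zero_history, h_rec]

/-- Discrete comparison principle: a doubly indexed nonnegative
sequence `U` satisfying the two-dimensional Gronwall-type inequality with summed
history term is dominated by the solution `μ` of the corresponding linear recurrence
`μ_{i,j} = a·μ_{i−1,j} + (γ + β·Y)·μ_{i,j−1} + c`. -/
theorem discrete_comparison (N₁ N₂ : ℕ) (hN₁ : 1 ≤ N₁) (hN₂ : 1 ≤ N₂)
    (h₂ Y : ℝ) (hh₂ : 0 < h₂) (hY : 0 < Y) (hN₂Y : ((N₂ : ℝ) - 1) * h₂ ≤ Y)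
    (a γ β c : ℝ) (ha : 1 ≤ a) (hγ : 0 ≤ γ) (hβ : 0 ≤ β) (hc : 0 ≤ c)
    (U μ : ℕ → ℕ → ℝ)
    (hUnn : ∀ i ≤ N₁, ∀ j ≤ N₂, 0 ≤ U i j)
    (hU0 : ∀ j ≤ N₂, U 0 j = 0) (hU0' : ∀ i ≤ N₁, U i 0 = 0)
    (hUrec : ∀ i j : ℕ, 1 ≤ i → i ≤ N₁ → 1 ≤ j → j ≤ N₂ →
      U i j ≤ a * U (i - 1) j + γ * U i (j - 1)
        + β * h₂ * ∑ s ∈ Finset.Icc 1 (j - 1), U i s + c)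
    (hμ0 : ∀ j, μ 0 j = 0) (hμ0' : ∀ i, μ i 0 = 0)
    (hμrec : ∀ i j : ℕ, 1 ≤ i → 1 ≤ j →
      μ i j = a * μ (i - 1) j + (γ + β * Y) * μ i (j - 1) + c) :
    ∀ i ≤ N₁, ∀ j ≤ N₂, U i j ≤ μ i j := by
  exact discrete_comparison_general hh₂.le hY.le hN₂Y (zero_le_one.trans ha) hγ hβ hc
    (fun j hj => (hU0 j hj).le) (fun i hi => (hU0' i hi).le) hUrec hμ0 hμ0' hμrec
end

section
/- Let N(u) = Σ_{s=0}^∞ ν_s u^s be an everywhere-convergent real power series, and let (v_k)_{k≥0} be a real sequence such that the power series g(z) = Σ_{k=0}^∞ v_k z^k has radius of convergence ρ > 0. Then for every real z with |z| < ρ, the series Σ_{n=0}^∞ A_n(N; v₀, …, v_n)·zⁿ converges absolutely and N(g(z)) = Σ_{n=0}^∞ A_n(N; v₀, …, v_n)·zⁿ. -/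
open Set

noncomputable section

/-!
Write `N(u) = ∑ ν s * u ^ s` and `g(z) = ∑ v k * z ^ k`. The double series with terms
`ν s * [zⁿ] g ^ s * z ^ n` is dominated by the same series formed from `|ν s|` and `|v k * z ^ k|`,
whose rows sum to `|ν s| * (∑ |v k * z ^ k|) ^ s`. Hence it may be summed in either order: over `n`
first it gives `N(g(z))`, over `s` first it gives a power series in `z` with coefficients
`∑ ν s * [zⁿ] g ^ s`. Applied to the polynomial `v₀ + ⋯ + vₙ τⁿ` for `τ` near `0`, the same argument
identifies the `n`-th Taylor coefficient of `N(v₀ + ⋯ + vₙ τⁿ)`, which is `Aₙ`; as `[zⁿ] g ^ s`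
depends only on `v₀, …, vₙ`, it is the coefficient above.
-/

section AbsolutelySummableCoefficients

open PowerSeries

variable {R : Type*} [NormedRing R] {φ ψ : R⟦X⟧}

/-- The series of coefficient norms, which majorizes `φ` coefficientwise. -/
def normMajorant (φ : R⟦X⟧) : ℝ⟦X⟧ := .mk fun n => ‖coeff n φ‖

@[simp]
lemma coeff_normMajorant (φ : R⟦X⟧) (n : ℕ) : coeff n (normMajorant φ) = ‖coeff n φ‖ :=
  coeff_mk _ _

lemma norm_coeff_pow_le_coeff_normMajorant_pow [NormOneClass R] (φ : R⟦X⟧) (s n : ℕ) :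
    ‖coeff n (φ ^ s)‖ ≤ coeff n (normMajorant φ ^ s) := by
  induction s generalizing n with
  | zero => simp only [pow_zero, coeff_one]; split_ifs <;> simp
  | succ s ih =>
    simp only [pow_succ, coeff_mul, coeff_normMajorant]
    exact norm_sum_le_of_le _ fun p _ => norm_mul_le_of_le (ih p.1) le_rfl

lemma summable_norm_coeff_mul (hφ : Summable fun n => ‖coeff n φ‖)
    (hψ : Summable fun n => ‖coeff n ψ‖) : Summable fun n => ‖coeff n (φ * ψ)‖ := by
  simpa only [coeff_mul] using summable_norm_sum_mul_antidiagonal_of_summable_norm hφ hψ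

lemma summable_norm_coeff_pow (hφ : Summable fun n => ‖coeff n φ‖) (s : ℕ) :
    Summable fun n => ‖coeff n (φ ^ s)‖ := by
  induction s with
  | zero =>
    refine summable_of_ne_finset_zero (s := {0}) fun n hn => ?_
    simp_all [coeff_one]
  | succ s ih => simpa only [pow_succ] using summable_norm_coeff_mul ih hφ

lemma tsum_coeff_mul [CompleteSpace R] (hφ : Summable fun n => ‖coeff n φ‖)
    (hψ : Summable fun n => ‖coeff n ψ‖) :
    ∑' n, coeff n (φ * ψ) = (∑' n, coeff n φ) * ∑' n, coeff n ψ := by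
  simp only [coeff_mul, tsum_mul_tsum_eq_tsum_sum_antidiagonal_of_summable_norm hφ hψ]

lemma tsum_coeff_pow [CompleteSpace R] (hφ : Summable fun n => ‖coeff n φ‖) (s : ℕ) :
    ∑' n, coeff n (φ ^ s) = (∑' n, coeff n φ) ^ s := by
  induction s with
  | zero => simp [coeff_one]
  | succ s ih => rw [pow_succ, pow_succ, tsum_coeff_mul (summable_norm_coeff_pow hφ s) hφ, ih]

lemma hasSum_coeff_pow [CompleteSpace R] (hφ : Summable fun n => ‖coeff n φ‖) (s : ℕ) :
    HasSum (fun n => coeff n (φ ^ s)) ((∑' n, coeff n φ) ^ s) :=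
  tsum_coeff_pow hφ s ▸ (summable_norm_coeff_pow hφ s).of_norm.hasSum

lemma hasSum_coeff_normMajorant_pow (hφ : Summable fun n => ‖coeff n φ‖) (s : ℕ) :
    HasSum (fun n => coeff n (normMajorant φ ^ s)) ((∑' n, ‖coeff n φ‖) ^ s) := by
  simpa using hasSum_coeff_pow (φ := normMajorant φ) (by simpa using hφ) s

lemma summable_mul_coeff_pow_s13 [NormOneClass R] [CompleteSpace R] {ν : ℕ → R}
    (hφ : Summable fun n => ‖coeff n φ‖)
    (hν : Summable fun s => ‖ν s‖ * (∑' n, ‖coeff n φ‖) ^ s) :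
    Summable fun p : ℕ × ℕ => ν p.1 * coeff p.2 (φ ^ p.1) := by
  have coeff_nonneg (s n : ℕ) : 0 ≤ coeff n (normMajorant φ ^ s) :=
    (norm_nonneg _).trans (norm_coeff_pow_le_coeff_normMajorant_pow φ s n)
  have hasSum_row (s : ℕ) := (hasSum_coeff_normMajorant_pow hφ s).mul_left ‖ν s‖
  have summable_majorant :
      Summable fun p : ℕ × ℕ => ‖ν p.1‖ * coeff p.2 (normMajorant φ ^ p.1) :=
    (summable_prod_of_nonneg fun p => mul_nonneg (norm_nonneg _) (coeff_nonneg _ _)).2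
      ⟨fun s => (hasSum_row s).summable, hν.congr fun s => (hasSum_row s).tsum_eq.symm⟩
  exact summable_majorant.of_norm_bounded fun p =>
    norm_mul_le_of_le le_rfl (norm_coeff_pow_le_coeff_normMajorant_pow φ p.1 p.2)

end AbsolutelySummableCoefficients

section Composition

open PowerSeries

lemma hasSum_apply_coeff_trunc {R M : Type*} [CommSemiring R] [AddCommMonoid M] [TopologicalSpace M]
    (φ : R⟦X⟧) (m : ℕ) {f : ℕ → R → M} (hf : ∀ k, f k 0 = 0) :
    HasSum (fun k => f k (coeff k (trunc m φ : R⟦X⟧))) (∑ k ∈ Finset.range m, f k (coeff k φ)) := by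
  have sum_eq : ∑ k ∈ Finset.range m, f k (coeff k φ) =
      ∑ k ∈ Finset.range m, f k (coeff k (trunc m φ : R⟦X⟧)) :=
    Finset.sum_congr rfl fun k hk => by rw [coeff_coe_trunc_of_lt (Finset.mem_range.1 hk)]
  rw [sum_eq]
  refine hasSum_sum_of_ne_finset_zero fun k hk => ?_
  rw [Polynomial.coeff_coe, coeff_trunc, if_neg (by simpa using hk), hf]

/-- The `n`-th coefficient of `∑ ν s * φ ^ s`, the composition of the power series `∑ ν s * u ^ s`
with `φ`. Unlike for `PowerSeries.subst`, the constant coefficient of `φ` is arbitrary, so this is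
an infinite sum, with value `0` where it diverges. -/
def compCoeff {R : Type*} [Semiring R] [TopologicalSpace R] (ν : ℕ → R) (φ : R⟦X⟧) (n : ℕ) : R :=
  ∑' s, ν s * coeff n (φ ^ s)

lemma hasSum_compCoeff {R : Type*} [NormedRing R] [NormOneClass R] [CompleteSpace R]
    {ν : ℕ → R} {φ : R⟦X⟧} {y : R} (hφ : Summable fun n => ‖coeff n φ‖)
    (hν : Summable fun s => ‖ν s‖ * (∑' n, ‖coeff n φ‖) ^ s)
    (hy : HasSum (fun s => ν s * (∑' n, coeff n φ) ^ s) y) :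
    HasSum (compCoeff ν φ) y := by
  have summable_double := summable_mul_coeff_pow_s13 hφ hν
  have hasSum_rows := summable_double.hasSum.prod_fiberwise
    fun s => (hasSum_coeff_pow hφ s).mul_left (ν s)
  have hasSum_double := summable_double.hasSum
  rw [hasSum_rows.unique hy] at hasSum_double
  exact ((Equiv.prodComm ℕ ℕ).hasSum_iff.2 hasSum_double).prod_fiberwise
    fun n => (summable_double.prod_symm.prod_factor n).hasSum

lemma compCoeff_trunc {R : Type*} [CommSemiring R] [TopologicalSpace R] (ν : ℕ → R) (φ : R⟦X⟧)
    {m n : ℕ} (hnm : n < m) : compCoeff ν (trunc m φ : R⟦X⟧) n = compCoeff ν φ n := by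
  refine tsum_congr fun s => congrArg (ν s * ·) ?_
  rw [← coeff_coe_trunc_of_lt hnm, trunc_trunc_pow, coeff_coe_trunc_of_lt hnm]

variable {𝕜 : Type*} [NormedField 𝕜]

lemma compCoeff_rescale (ν : ℕ → 𝕜) (φ : 𝕜⟦X⟧) (z : 𝕜) (n : ℕ) :
    compCoeff ν (rescale z φ) n = compCoeff ν φ n * z ^ n := by
  simp only [compCoeff, ← map_pow, coeff_rescale, ← tsum_mul_right]
  exact tsum_congr fun s => by ring

lemma hasSum_compCoeff_mul_pow [CompleteSpace 𝕜] {ν : ℕ → 𝕜} {φ : 𝕜⟦X⟧} {y z : 𝕜}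
    (hφ : Summable fun n => ‖coeff n φ * z ^ n‖)
    (hν : Summable fun s => ‖ν s‖ * (∑' n, ‖coeff n φ * z ^ n‖) ^ s)
    (hy : HasSum (fun s => ν s * (∑' n, coeff n φ * z ^ n) ^ s) y) :
    HasSum (fun n => compCoeff ν φ n * z ^ n) y := by
  have coeff_rescale_eq (n : ℕ) : coeff n (rescale z φ) = coeff n φ * z ^ n := by
    rw [coeff_rescale, mul_comm]
  simp only [← coeff_rescale_eq] at hφ hν hy
  simpa only [← compCoeff_rescale] using hasSum_compCoeff hφ hν hy

end Composition

section Taylor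

open Filter Topology

lemma iteratedDeriv_apply_zero_of_eventually_hasSum {𝕜 : Type*} [NontriviallyNormedField 𝕜]
    [CompleteSpace 𝕜] [CharZero 𝕜] {f : 𝕜 → 𝕜} {a : ℕ → 𝕜}
    (hf : ∀ᶠ z in 𝓝 0, HasSum (fun n => a n * z ^ n) (f z)) (n : ℕ) :
    iteratedDeriv n f 0 = n.factorial * a n := by
  have hasFPowerSeriesAt_a : HasFPowerSeriesAt f (.ofScalars 𝕜 a) 0 := by
    rw [hasFPowerSeriesAt_iff]
    simpa [mul_comm] using hf
  have coeff_eq : a n = iteratedDeriv n f 0 / n.factorial := by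
    simpa only [FormalMultilinearSeries.coeff_ofScalars] using
      congrArg (FormalMultilinearSeries.coeff · n) (hasFPowerSeriesAt_a.eq_formalMultilinearSeries
        hasFPowerSeriesAt_a.analyticAt.hasFPowerSeriesAt)
  rw [coeff_eq, mul_div_cancel₀ _ (Nat.cast_ne_zero.2 n.factorial_ne_zero)]

end Taylor

section Adomian

open Filter Topology PowerSeries

variable {ν : ℕ → ℝ} {N : ℝ → ℝ} {R : ℝ}

lemma hasSum_compCoeff_mul_pow_of_tsum_lt
    (hN : ∀ u, |u| < R → HasSum (fun s => ν s * u ^ s) (N u)) {φ : ℝ⟦X⟧} {z : ℝ}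
    (hφ : Summable fun k => |coeff k φ * z ^ k|) (hR : ∑' k, |coeff k φ * z ^ k| < R) :
    HasSum (fun n => compCoeff ν φ n * z ^ n) (N (∑' k, coeff k φ * z ^ k)) := by
  simp only [← Real.norm_eq_abs] at hN hφ hR
  have norm_tsum_lt : ‖∑' k, coeff k φ * z ^ k‖ < R := (norm_tsum_le_tsum_norm hφ).trans_lt hR
  have norm_tsum_norm : ‖∑' k, ‖coeff k φ * z ^ k‖‖ = ∑' k, ‖coeff k φ * z ^ k‖ :=
    Real.norm_of_nonneg (tsum_nonneg fun _ => norm_nonneg _)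
  have summable_norm : Summable fun s => ‖ν s‖ * (∑' k, ‖coeff k φ * z ^ k‖) ^ s :=
    (hN _ (norm_tsum_norm.trans_lt hR)).summable.norm.congr fun s => by
      rw [norm_mul, norm_pow, norm_tsum_norm]
  exact hasSum_compCoeff_mul_pow hφ summable_norm (hN _ norm_tsum_lt)

lemma eventually_hasSum_compCoeff_trunc
    (hN : ∀ u, |u| < R → HasSum (fun s => ν s * u ^ s) (N u)) {φ : ℝ⟦X⟧}
    (hφ : |coeff 0 φ| < R) (m : ℕ) :
    ∀ᶠ τ in 𝓝 0, HasSum (fun n => compCoeff ν (trunc (m + 1) φ : ℝ⟦X⟧) n * τ ^ n)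
      (N (∑ k ∈ Finset.range (m + 1), coeff k φ * τ ^ k)) := by
  have tendsto_majorant : Tendsto (fun τ => ∑ k ∈ Finset.range (m + 1), |coeff k φ * τ ^ k|)
      (𝓝 0) (𝓝 |coeff 0 φ|) := by
    refine Continuous.tendsto' (by fun_prop) _ _ ?_
    simp [Finset.sum_range_succ']
  filter_upwards [tendsto_majorant.eventually_lt_const hφ] with τ hτ
  have hasSum_trunc :=
    hasSum_apply_coeff_trunc φ (m + 1) (f := fun k c => c * τ ^ k) fun k => zero_mul _
  have hasSum_abs_trunc :=
    hasSum_apply_coeff_trunc φ (m + 1) (f := fun k c => |c * τ ^ k|) fun k => by simp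
  simpa only [hasSum_trunc.tsum_eq] using hasSum_compCoeff_mul_pow_of_tsum_lt hN
    hasSum_abs_trunc.summable (hasSum_abs_trunc.tsum_eq.trans_lt hτ)

lemma adomian_eq_compCoeff (hN : ∀ u, |u| < R → HasSum (fun s => ν s * u ^ s) (N u))
    {v : ℕ → ℝ} (hv : |v 0| < R) (n : ℕ) : adomian N n v = compCoeff ν (.mk v) n := by
  have eventually_hasSum := eventually_hasSum_compCoeff_trunc hN (φ := .mk v) (by simpa using hv) n
  simp only [coeff_mk] at eventually_hasSum
  rw [adomian, iteratedDeriv_apply_zero_of_eventually_hasSum eventually_hasSum,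
    inv_mul_cancel_left₀ (Nat.cast_ne_zero.2 n.factorial_ne_zero),
    compCoeff_trunc ν _ n.lt_succ_self]

theorem adomian_generating_identity_general
    (hN : ∀ u, |u| < R → HasSum (fun s => ν s * u ^ s) (N u)) {v : ℕ → ℝ} {z : ℝ}
    (hv : Summable fun k => |v k * z ^ k|) (hR : ∑' k, |v k * z ^ k| < R) :
    Summable (fun n => |adomian N n v * z ^ n|) ∧
      HasSum (fun n => adomian N n v * z ^ n) (N (∑' k, v k * z ^ k)) := by
  have abs_v_zero_lt : |v 0| < R := by
    simpa using (hv.le_tsum 0 fun _ _ => abs_nonneg _).trans_lt hR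
  have hasSum_comp := hasSum_compCoeff_mul_pow_of_tsum_lt hN (φ := .mk v) (z := z)
    (by simpa only [coeff_mk] using hv) (by simpa only [coeff_mk] using hR)
  simp only [← adomian_eq_compCoeff hN abs_v_zero_lt, coeff_mk] at hasSum_comp
  exact ⟨hasSum_comp.summable.abs, hasSum_comp⟩

end Adomian

/-- Generating identity for Adomian polynomials: if
`N(u) = Σ ν_s u^s` everywhere and `g(z) = Σ v_k z^k` has radius of convergence `ρ > 0`,
then for every `|z| < ρ` the series `Σ Aₙ(N; v₀,…,vₙ) zⁿ` converges absolutely and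
`N(g(z)) = Σ_{n=0}^∞ Aₙ(N; v₀,…,vₙ) zⁿ`. -/
theorem adomian_generating_identity (ν : ℕ → ℝ) (N : ℝ → ℝ)
    (hN : ∀ v : ℝ, HasSum (fun s : ℕ => ν s * v ^ s) (N v))
    (v : ℕ → ℝ) (ρ : ℝ) (hρ : 0 < ρ)
    (hconv : ∀ z : ℝ, |z| < ρ → Summable (fun k : ℕ => v k * z ^ k)) :
    ∀ z : ℝ, |z| < ρ →
      Summable (fun n : ℕ => |adomian N n v * z ^ n|) ∧
      HasSum (fun n : ℕ => adomian N n v * z ^ n) (N (∑' k : ℕ, v k * z ^ k)) := by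
  intro z hz
  exact adomian_generating_identity_general (fun u _ => hN u) (hconv z hz).abs (lt_add_one _)
end
end

section
/- Under the hypotheses of the approximation theorem for the basic problem (unique solution u of the Goursat problem; u⁰ the solution of the basic problem for a given mesh), there exist constants δ > 0 and M_u > 0, independent of the mesh parameters, such that for every mesh with h₁ ≤ δ and h₂ ≤ δ the solution u⁰ of the basic problem satisfies sup_{(x,y) ∈ D̄} |u⁰(x,y)| ≤ M_u. -/
open Set

noncomputable section

/-- `u0` solves the basic problem: the Goursat problem with the nonlinear coefficient
frozen, on each open mesh cell `P_{i,j}`, at the value of the unknown at the lower-left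
corner of that cell. -/
structure BasicSol (X Y : ℝ) (N : ℝ → ℝ) (f : ℝ × ℝ → ℝ) (ψ φ : ℝ → ℝ)
    (N₁ N₂ : ℕ) (u0 : ℝ × ℝ → ℝ) : Prop where
  cont : ContinuousOn u0 (clD X Y)
  diffx : ∀ i ∈ Finset.Icc 1 N₁, ∀ j ∈ Finset.Icc 1 N₂, ∀ p ∈ cellOp X Y N₁ N₂ i j,
      DifferentiableAt ℝ (fun t => u0 (t, p.2)) p.1
  diffy : ∀ i ∈ Finset.Icc 1 N₁, ∀ j ∈ Finset.Icc 1 N₂, ∀ p ∈ cellOp X Y N₁ N₂ i j,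
      DifferentiableAt ℝ (fun t => u0 (p.1, t)) p.2
  diffxy : ∀ i ∈ Finset.Icc 1 N₁, ∀ j ∈ Finset.Icc 1 N₂, ∀ p ∈ cellOp X Y N₁ N₂ i j,
      DifferentiableAt ℝ (fun t => pdx u0 (p.1, t)) p.2
  contx : ∀ i ∈ Finset.Icc 1 N₁, ∀ j ∈ Finset.Icc 1 N₂,
      ContinuousOn (pdx u0) (cellOp X Y N₁ N₂ i j)
  conty : ∀ i ∈ Finset.Icc 1 N₁, ∀ j ∈ Finset.Icc 1 N₂,
      ContinuousOn (pdy u0) (cellOp X Y N₁ N₂ i j)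
  contxy : ∀ i ∈ Finset.Icc 1 N₁, ∀ j ∈ Finset.Icc 1 N₂,
      ContinuousOn (pdxy u0) (cellOp X Y N₁ N₂ i j)
  eqn : ∀ i ∈ Finset.Icc 1 N₁, ∀ j ∈ Finset.Icc 1 N₂, ∀ p ∈ cellOp X Y N₁ N₂ i j,
      pdxy u0 p + N (u0 (meshNode X Y N₁ N₂ i j)) * u0 p = f p
  bc1 : ∀ x ∈ Icc (0 : ℝ) X, u0 (x, 0) = ψ x
  bc2 : ∀ y ∈ Icc (0 : ℝ) Y, u0 (0, y) = φ y

/-!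
The error `e = u⁰ - u` vanishes on both axes. Let `K` be a Lipschitz constant of `(a, b) ↦ N(a) b`
on a ball slightly larger than the range of `u`, and let `u` vary by at most `η` over a mesh cell.
The barrier `z = η exp (√(2K) (x + y))` satisfies `∂²z/∂x∂y = 2K z`, and for fine meshes `z` is as
small as desired on `D̄`. If `|e| < z` failed somewhere, consider a minimal point of failure `p` for
the product order. On the rectangle below `p` the values of `u⁰` stay in the ball, and both `u⁰` and
its value at the mesh node differ from `u` by at most `z + η ≤ 2z`, so
`|∂²e/∂x∂y| ≤ 2K z = ∂²z/∂x∂y`. Integrating over that rectangle gives `|e(p)| < z(p)`, which is a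
contradiction. Hence `u⁰ → u` uniformly as the mesh is refined, and `u` is bounded.
-/

section Order

lemma le_of_forall_le_of_disjoint_Ioo {α β : Type*} [LinearOrder α] [Preorder β] {S : Set α}
    (hS : S.Finite) {g : α → β} {a b : α} (hab : a ≤ b)
    (h : ∀ s t, a ≤ s → s ≤ t → t ≤ b → Disjoint (Ioo s t) S → g s ≤ g t) : g a ≤ g b := by
  induction S, hS using Set.Finite.induction_on generalizing a b with
  | empty => exact h a b le_rfl hab le_rfl (disjoint_empty _)
  | @insert c S _ _ ih =>
    have le_of_notMem : ∀ {a' b'}, a ≤ a' → a' ≤ b' → b' ≤ b → c ∉ Ioo a' b' → g a' ≤ g b' :=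
      fun haa' hab' hbb' hc => ih hab' fun s t hs hst ht hd =>
        h s t (haa'.trans hs) hst (ht.trans hbb') <|
          disjoint_insert_right.2 ⟨fun hc' => hc (Ioo_subset_Ioo hs ht hc'), hd⟩
    by_cases hc : c ∈ Ioo a b
    · calc
        g a ≤ g c := le_of_notMem le_rfl hc.1.le hc.2.le right_notMem_Ioo
        _ ≤ g b := le_of_notMem hc.1.le hc.2.le le_rfl left_notMem_Ioo
    · exact le_of_notMem le_rfl hab le_rfl hc

lemma monotoneOn_Icc_of_monotoneOn_Ioo {α β : Type*} [LinearOrder α] [TopologicalSpace α]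
    [OrderTopology α] [DenselyOrdered α] [LinearOrder β] [TopologicalSpace β]
    [OrderClosedTopology β] {g : α → β} {a b : α} (hg : ContinuousOn g (Icc a b))
    (hmono : MonotoneOn g (Ioo a b)) : MonotoneOn g (Icc a b) := by
  rcases lt_or_ge a b with hab | hba
  · have clusterPt : ∀ x ∈ Icc a b, ∀ s, Ioo a b ⊆ s → ClusterPt x (Filter.principal s) :=
      fun x hx s hs => mem_closure_iff_clusterPt.1 <|
        closure_mono hs (by rwa [closure_Ioo hab.ne])
    have ha : a ∈ Icc a b := left_mem_Icc.2 hab.le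
    have hb : b ∈ Icc a b := right_mem_Icc.2 hab.le
    rw [← Ioc_insert_left hab.le, ← Ioo_insert_right hab]
    refine (hmono.insert_of_continuousWithinAt (clusterPt b hb _ Subset.rfl)
      ((hg b hb).mono Ioo_subset_Icc_self)).insert_of_continuousWithinAt
      (clusterPt a ha _ (subset_insert _ _)) ((hg a ha).mono ?_)
    exact insert_subset hb Ioo_subset_Icc_self
  · exact (subsingleton_Icc_of_ge hba).monotoneOn g

lemma exists_minimal_mem_of_isCompact {α : Type*} [TopologicalSpace α] [PartialOrder α]
    [OrderClosedTopology α] {s : Set α} (hs : IsCompact s) (hne : s.Nonempty) :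
    ∃ a, Minimal (· ∈ s) a := by
  refine zorn_le₀ (α := αᵒᵈ) (OrderDual.ofDual ⁻¹' s) fun c hcs hc => ?_
  rcases c.eq_empty_or_nonempty with rfl | hcne
  · exact ⟨OrderDual.toDual hne.some, hne.some_mem, by simp⟩
  have : Nonempty c := hcne.to_subtype
  have hdir : Directed (· ⊇ ·) fun a : c => s ∩ Iic (OrderDual.ofDual (a : αᵒᵈ)) := by
    intro a b
    rcases hc.total a.2 b.2 with hab | hba
    · exact ⟨b, inter_subset_inter_right _ (Iic_subset_Iic.2 hab), Subset.rfl⟩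
    · exact ⟨a, Subset.rfl, inter_subset_inter_right _ (Iic_subset_Iic.2 hba)⟩
  obtain ⟨x, hx⟩ := IsCompact.nonempty_iInter_of_directed_nonempty_isCompact_isClosed _ hdir
    (fun a => ⟨_, hcs a.2, le_rfl⟩) (fun a => hs.inter_right isClosed_Iic)
    (fun a => hs.isClosed.inter isClosed_Iic)
  rw [mem_iInter] at hx
  exact ⟨OrderDual.toDual x, (hx (Classical.arbitrary c)).1, fun a ha => (hx ⟨a, ha⟩).2⟩

lemma forall_lt_of_forall_lt_of_lt {α β : Type*} [TopologicalSpace α] [PartialOrder α]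
    [OrderClosedTopology α] [TopologicalSpace β] [LinearOrder β] [OrderClosedTopology β]
    {s : Set α} (hs : IsCompact s) {f g : α → β} (hf : ContinuousOn f s) (hg : ContinuousOn g s)
    (h : ∀ a ∈ s, (∀ b ∈ s, b < a → f b < g b) → f a < g a) : ∀ a ∈ s, f a < g a := by
  by_contra! hbad
  have hcompact : IsCompact {a ∈ s | g a ≤ f a} :=
    hs.of_isClosed_subset (hs.isClosed.isClosed_le hg hf) (sep_subset _ _)
  obtain ⟨a, ⟨has, hle⟩, hmin⟩ := exists_minimal_mem_of_isCompact hcompact hbad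
  refine (h a has fun b hb hba => ?_).not_ge hle
  by_contra! hb'
  exact hba.not_ge (hmin ⟨hb, hb'⟩ hba.le)

end Order

/-- The increment of `w` over the rectangle with lower-left corner `p` and upper-right corner `q`,
i.e. the integral of its mixed derivative. -/
def rectIncrement (w : ℝ × ℝ → ℝ) (p q : ℝ × ℝ) : ℝ :=
  w q - w (p.1, q.2) - w (q.1, p.2) + w p

/-- The mixed derivative `∂²w/∂x∂y` exists at `p` and equals `w'`. The first derivative `∂w/∂x`,
which has to be known along the vertical line through `p`, is passed as the function `wx`. -/
def HasMixedDerivAt (w wx : ℝ × ℝ → ℝ) (w' : ℝ) (p : ℝ × ℝ) : Prop :=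
  HasDerivAt (fun t => w (t, p.2)) (wx p) p.1 ∧ HasDerivAt (fun t => wx (p.1, t)) w' p.2

section MixedDerivative

variable {w wx wxy z zx zxy : ℝ × ℝ → ℝ} {w' z' : ℝ} {p q : ℝ × ℝ}

lemma HasMixedDerivAt.add (hw : HasMixedDerivAt w wx w' p) (hz : HasMixedDerivAt z zx z' p) :
    HasMixedDerivAt (w + z) (wx + zx) (w' + z') p :=
  ⟨hw.1.add hz.1, hw.2.add hz.2⟩

lemma HasMixedDerivAt.sub (hw : HasMixedDerivAt w wx w' p) (hz : HasMixedDerivAt z zx z' p) :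
    HasMixedDerivAt (w - z) (wx - zx) (w' - z') p :=
  ⟨hw.1.sub hz.1, hw.2.sub hz.2⟩

lemma monotoneOn_sub_of_mixedDeriv_nonneg {a b c d : ℝ} (hab : a ≤ b)
    (hw : ∀ y ∈ Ioo c d, ContinuousOn (fun x => w (x, y)) (Icc a b))
    (hderiv : ∀ r ∈ Ioo a b ×ˢ Ioo c d, HasMixedDerivAt w wx (wxy r) r)
    (hnonneg : ∀ r ∈ Ioo a b ×ˢ Ioo c d, 0 ≤ wxy r) :
    MonotoneOn (fun y => w (b, y) - w (a, y)) (Ioo c d) := by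
  intro y hy y' hy' hyy'
  have hwx : ∀ x ∈ Ioo a b, wx (x, y) ≤ wx (x, y') := fun x hx =>
    monotoneOn_of_hasDerivWithinAt_nonneg (f := fun y => wx (x, y)) (f' := fun y => wxy (x, y))
      (convex_Ioo c d) (fun y hy => (hderiv (x, y) ⟨hx, hy⟩).2.continuousAt.continuousWithinAt)
      (fun y hy => (hderiv (x, y) ⟨hx, interior_subset hy⟩).2.hasDerivWithinAt)
      (fun y hy => hnonneg (x, y) ⟨hx, interior_subset hy⟩) hy hy' hyy'
  have hmono : MonotoneOn (fun x => w (x, y') - w (x, y)) (Icc a b) := by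
    refine monotoneOn_of_hasDerivWithinAt_nonneg (f' := fun x => wx (x, y') - wx (x, y))
      (convex_Icc a b) ((hw y' hy').sub (hw y hy)) ?_ ?_ <;> rw [interior_Icc] <;> intro x hx
    · exact ((hderiv (x, y') ⟨hx, hy'⟩).1.sub (hderiv (x, y) ⟨hx, hy⟩).1).hasDerivWithinAt
    · exact sub_nonneg.2 (hwx x hx)
  have hends : w (a, y') - w (a, y) ≤ w (b, y') - w (b, y) :=
    hmono (left_mem_Icc.2 hab) (right_mem_Icc.2 hab) hab
  dsimp only
  linarith

lemma rectIncrement_nonneg (hpq : p ≤ q) (hw : ContinuousOn w (Icc p q))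
    (hderiv : ∀ r ∈ Ioo p.1 q.1 ×ˢ Ioo p.2 q.2, HasMixedDerivAt w wx (wxy r) r)
    (hnonneg : ∀ r ∈ Ioo p.1 q.1 ×ˢ Ioo p.2 q.2, 0 ≤ wxy r) : 0 ≤ rectIncrement w p q := by
  obtain ⟨a, c⟩ := p
  obtain ⟨b, d⟩ := q
  obtain ⟨hab : a ≤ b, hcd : c ≤ d⟩ := hpq
  have hrow : ∀ y ∈ Ioo c d, ContinuousOn (fun x => w (x, y)) (Icc a b) := fun y hy =>
    hw.comp (by fun_prop) fun x hx => ⟨⟨hx.1, hy.1.le⟩, hx.2, hy.2.le⟩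
  have hcol : ∀ x ∈ Icc a b, ContinuousOn (fun y => w (x, y)) (Icc c d) := fun x hx =>
    hw.comp (by fun_prop) fun y hy => ⟨⟨hx.1, hy.1⟩, hx.2, hy.2⟩
  have hmono : MonotoneOn (fun y => w (b, y) - w (a, y)) (Icc c d) :=
    monotoneOn_Icc_of_monotoneOn_Ioo
      ((hcol b (right_mem_Icc.2 hab)).sub (hcol a (left_mem_Icc.2 hab)))
      (monotoneOn_sub_of_mixedDeriv_nonneg hab hrow hderiv hnonneg)
  have hends : w (b, c) - w (a, c) ≤ w (b, d) - w (a, d) :=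
    hmono (left_mem_Icc.2 hcd) (right_mem_Icc.2 hcd) hcd
  simp only [rectIncrement]
  linarith

variable {S T : Set ℝ}

lemma rectIncrement_nonneg_of_off_lines (hS : S.Finite) (hT : T.Finite) (hpq : p ≤ q)
    (hw : ContinuousOn w (Icc p q))
    (hderiv : ∀ r ∈ (Ioo p.1 q.1 \ S) ×ˢ (Ioo p.2 q.2 \ T), HasMixedDerivAt w wx (wxy r) r)
    (hnonneg : ∀ r ∈ (Ioo p.1 q.1 \ S) ×ˢ (Ioo p.2 q.2 \ T), 0 ≤ wxy r) :
    0 ≤ rectIncrement w p q := by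
  have hpiece : ∀ s t c d, p.1 ≤ s → s ≤ t → t ≤ q.1 → Disjoint (Ioo s t) S →
      p.2 ≤ c → c ≤ d → d ≤ q.2 → Disjoint (Ioo c d) T → 0 ≤ rectIncrement w (s, c) (t, d) := by
    intro s t c d hs hst ht hSd hc hcd hd hTd
    have hsub : Ioo s t ×ˢ Ioo c d ⊆ (Ioo p.1 q.1 \ S) ×ˢ (Ioo p.2 q.2 \ T) :=
      prod_mono (subset_sdiff.2 ⟨Ioo_subset_Ioo hs ht, hSd⟩)
        (subset_sdiff.2 ⟨Ioo_subset_Ioo hc hd, hTd⟩)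
    exact rectIncrement_nonneg ⟨hst, hcd⟩ (hw.mono (Icc_subset_Icc ⟨hs, hc⟩ ⟨ht, hd⟩))
      (fun r hr => hderiv r (hsub hr)) fun r hr => hnonneg r (hsub hr)
  have hstrip : w (q.1, p.2) - w (p.1, p.2) ≤ w (q.1, q.2) - w (p.1, q.2) := by
    refine le_of_forall_le_of_disjoint_Ioo (g := fun y => w (q.1, y) - w (p.1, y)) hT hpq.2
      fun c d hc hcd hd hTd => ?_
    have : w (p.1, d) - w (p.1, c) ≤ w (q.1, d) - w (q.1, c) := by
      refine le_of_forall_le_of_disjoint_Ioo (g := fun x => w (x, d) - w (x, c)) hS hpq.1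
        fun s t hs hst ht hSd => ?_
      have := hpiece s t c d hs hst ht hSd hc hcd hd hTd
      simp only [rectIncrement] at this
      linarith
    linarith
  simp only [rectIncrement]
  linarith

lemma abs_rectIncrement_le_of_off_lines (hS : S.Finite) (hT : T.Finite) (hpq : p ≤ q)
    (hw : ContinuousOn w (Icc p q)) (hz : ContinuousOn z (Icc p q))
    (hwderiv : ∀ r ∈ (Ioo p.1 q.1 \ S) ×ˢ (Ioo p.2 q.2 \ T), HasMixedDerivAt w wx (wxy r) r)
    (hzderiv : ∀ r ∈ (Ioo p.1 q.1 \ S) ×ˢ (Ioo p.2 q.2 \ T), HasMixedDerivAt z zx (zxy r) r)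
    (hle : ∀ r ∈ (Ioo p.1 q.1 \ S) ×ˢ (Ioo p.2 q.2 \ T), |wxy r| ≤ zxy r) :
    |rectIncrement w p q| ≤ rectIncrement z p q := by
  have hsub : 0 ≤ rectIncrement (z - w) p q :=
    rectIncrement_nonneg_of_off_lines (wxy := zxy - wxy) hS hT hpq (hz.sub hw)
      (fun r hr => (hzderiv r hr).sub (hwderiv r hr))
      fun r hr => sub_nonneg.2 (abs_le.1 (hle r hr)).2
  have hadd : 0 ≤ rectIncrement (z + w) p q :=
    rectIncrement_nonneg_of_off_lines (wxy := zxy + wxy) hS hT hpq (hz.add hw)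
      (fun r hr => (hzderiv r hr).add (hwderiv r hr))
      fun r hr => neg_le_iff_add_nonneg'.1 (abs_le.1 (hle r hr)).1
  simp only [rectIncrement, Pi.sub_apply, Pi.add_apply] at hsub hadd ⊢
  exact abs_le.2 ⟨by linarith, by linarith⟩

/-- The bound on `wxy` is only required as long as `|w| < z` has not been violated: at a minimal
point of violation it holds on the whole rectangle below. -/
theorem abs_lt_of_abs_mixedDeriv_le (hS : S.Finite) (hT : T.Finite)
    (hw : ContinuousOn w (Icc 0 q)) (hz : ContinuousOn z (Icc 0 q))
    (hwx : ∀ x ∈ Icc 0 q.1, w (x, 0) = 0) (hwy : ∀ y ∈ Icc 0 q.2, w (0, y) = 0)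
    (hzlt : ∀ p ∈ Icc 0 q, rectIncrement z 0 p < z p)
    (hwderiv : ∀ r ∈ (Ioo 0 q.1 \ S) ×ˢ (Ioo 0 q.2 \ T), HasMixedDerivAt w wx (wxy r) r)
    (hzderiv : ∀ r ∈ (Ioo 0 q.1 \ S) ×ˢ (Ioo 0 q.2 \ T), HasMixedDerivAt z zx (zxy r) r)
    (hle : ∀ r ∈ (Ioo 0 q.1 \ S) ×ˢ (Ioo 0 q.2 \ T),
      (∀ r' ∈ Icc 0 r, |w r'| < z r') → |wxy r| ≤ zxy r) :
    ∀ p ∈ Icc 0 q, |w p| < z p := by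
  refine forall_lt_of_forall_lt_of_lt isCompact_Icc hw.abs hz fun p hp hbelow => ?_
  have hIcc : Icc 0 p ⊆ Icc 0 q := Icc_subset_Icc_right hp.2
  have hIoo : (Ioo 0 p.1 \ S) ×ˢ (Ioo 0 p.2 \ T) ⊆ (Ioo 0 q.1 \ S) ×ˢ (Ioo 0 q.2 \ T) :=
    prod_mono (sdiff_subset_sdiff_left (Ioo_subset_Ioo_right hp.2.1))
      (sdiff_subset_sdiff_left (Ioo_subset_Ioo_right hp.2.2))
  have hincr : rectIncrement w 0 p = w p := by
    have h0 : w 0 = 0 := hwx 0 ⟨le_rfl, hp.1.1.trans hp.2.1⟩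
    simp only [rectIncrement, Prod.fst_zero, Prod.snd_zero, hwx p.1 ⟨hp.1.1, hp.2.1⟩,
      hwy p.2 ⟨hp.1.2, hp.2.2⟩, h0, sub_zero, add_zero]
  calc
    |w p| = |rectIncrement w 0 p| := by rw [hincr]
    _ ≤ rectIncrement z 0 p :=
      abs_rectIncrement_le_of_off_lines hS hT hp.1 (hw.mono hIcc) (hz.mono hIcc)
        (fun r hr => hwderiv r (hIoo hr)) (fun r hr => hzderiv r (hIoo hr)) fun r hr =>
          hle r (hIoo hr) fun r' hr' =>
            have hrp : r < p := Prod.lt_iff.2 (.inl ⟨hr.1.1.2, hr.2.1.2.le⟩)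
            hbelow r' (hIcc ⟨hr'.1, hr'.2.trans hrp.le⟩) (hr'.2.trans_lt hrp)
    _ < z p := hzlt p hp

end MixedDerivative

/-- The supersolution `η exp (l (x + y))`, whose mixed derivative is `l ^ 2` times itself. -/
def expBarrier (η l : ℝ) (p : ℝ × ℝ) : ℝ := η * Real.exp (l * (p.1 + p.2))

namespace expBarrier

variable {η l : ℝ}

lemma hasMixedDerivAt (η l : ℝ) (p : ℝ × ℝ) :
    HasMixedDerivAt (expBarrier η l) (fun q => l * expBarrier η l q)
      (l ^ 2 * expBarrier η l p) p := by
  have hlin : ∀ s t : ℝ, HasDerivAt (fun t => l * (s + t)) l t := fun s t => by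
    simpa using ((hasDerivAt_id t).const_add s).const_mul l
  have hexp : ∀ s t : ℝ,
      HasDerivAt (fun t => expBarrier η l (s, t)) (l * expBarrier η l (s, t)) t :=
    fun s t => ((hlin s t).exp.const_mul η).congr_deriv (by simp only [expBarrier]; ring)
  refine ⟨?_, ((hexp p.1 p.2).const_mul l).congr_deriv (by ring)⟩
  simpa only [expBarrier, add_comm] using hexp p.2 p.1

protected lemma continuous (η l : ℝ) : Continuous (expBarrier η l) := by
  unfold expBarrier
  fun_prop

lemma exists_pos_apply_eq (l : ℝ) (p : ℝ × ℝ) {c : ℝ} (hc : 0 < c) :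
    ∃ η > 0, expBarrier η l p = c :=
  ⟨c * Real.exp (-(l * (p.1 + p.2))), by positivity, by
    rw [expBarrier, mul_assoc, ← Real.exp_add, neg_add_cancel, Real.exp_zero, mul_one]⟩

protected lemma monotone (hη : 0 ≤ η) (hl : 0 ≤ l) : Monotone (expBarrier η l) := fun p q hpq => by
  have h₁ := hpq.1
  have h₂ := hpq.2
  unfold expBarrier
  gcongr

lemma le_apply (hη : 0 ≤ η) (hl : 0 ≤ l) {p : ℝ × ℝ} (hp : 0 ≤ p) : η ≤ expBarrier η l p := by
  simpa [expBarrier] using expBarrier.monotone hη hl hp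

lemma rectIncrement_lt (hη : 0 < η) (hl : 0 ≤ l) {p : ℝ × ℝ} (hp : 0 ≤ p) :
    rectIncrement (expBarrier η l) 0 p < expBarrier η l p := by
  have hzero : expBarrier η l 0 = η := by simp [expBarrier]
  have hleft : η ≤ expBarrier η l (0, p.2) := le_apply hη.le hl ⟨le_rfl, hp.2⟩
  have hbottom : η ≤ expBarrier η l (p.1, 0) := le_apply hη.le hl ⟨hp.1, le_rfl⟩
  simp only [rectIncrement, Prod.fst_zero, Prod.snd_zero, hzero]
  linarith

end expBarrier

lemma locallyLipschitz_of_hasSum_pow {ν : ℕ → ℝ} {N : ℝ → ℝ}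
    (hN : ∀ v : ℝ, HasSum (fun s : ℕ => ν s * v ^ s) (N v)) : LocallyLipschitz N := by
  have hradius : (FormalMultilinearSeries.ofScalars ℝ ν).radius = ⊤ :=
    FormalMultilinearSeries.radius_eq_top_of_summable_norm _ fun r => by
      simpa [FormalMultilinearSeries.ofScalars_norm] using (hN r).summable.norm
  have hseries : HasFPowerSeriesOnBall N (FormalMultilinearSeries.ofScalars ℝ ν) 0 ⊤ :=
    ⟨hradius.ge, ENNReal.zero_lt_top, fun {v} _ => by
      simpa only [FormalMultilinearSeries.ofScalars_apply_eq, smul_eq_mul, zero_add] using hN v⟩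
  have hanalytic : AnalyticOnNhd ℝ N univ := by
    simpa using hseries.analyticOnNhd
  exact hanalytic.contDiff.locallyLipschitz

lemma locallyLipschitz_comp_fst_mul_snd {N : ℝ → ℝ} (hN : LocallyLipschitz N) :
    LocallyLipschitz fun p : ℝ × ℝ => N p.1 * p.2 :=
  (contDiff_mul (𝕜 := ℝ) (𝔸 := ℝ)).locallyLipschitz.comp <|
    (hN.comp LipschitzWith.prod_fst.locallyLipschitz).prodMk LipschitzWith.prod_snd.locallyLipschitz

lemma abs_comp_mul_sub_comp_mul_le {N : ℝ → ℝ} {K : NNReal} {R c a b v : ℝ}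
    (hK : LipschitzOnWith K (fun p : ℝ × ℝ => N p.1 * p.2) (Metric.closedBall 0 R))
    (ha : |a| ≤ R) (hb : |b| ≤ R) (hv : |v| ≤ R) (hav : |a - v| ≤ c) (hbv : |b - v| ≤ c) :
    |N a * b - N v * v| ≤ K * c := by
  have mem_ball : ∀ {s t : ℝ}, |s| ≤ R → |t| ≤ R → (s, t) ∈ Metric.closedBall 0 R :=
    fun hs ht => mem_closedBall_zero_iff.2 (max_le hs ht)
  calc
    |N a * b - N v * v| ≤ K * dist (a, b) (v, v) :=
      hK.dist_le_mul _ (mem_ball ha hb) _ (mem_ball hv hv)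
    _ ≤ K * c := by gcongr; exact max_le hav hbv

lemma clD_eq_Icc (X Y : ℝ) : clD X Y = Icc 0 (X, Y) :=
  (Icc_prod_eq 0 (X, Y)).symm

lemma isCompact_clD (X Y : ℝ) : IsCompact (clD X Y) := isCompact_Icc.prod isCompact_Icc

/-- The mesh lines `i h`, `1 ≤ i ≤ n`, in one coordinate direction. -/
def meshPoints (h : ℝ) (n : ℕ) : Set ℝ := (fun i : ℕ => i * h) '' Finset.Icc 1 n

lemma meshPoints_finite (h : ℝ) (n : ℕ) : (meshPoints h n).Finite :=
  (Finset.finite_toSet _).image _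

lemma exists_mem_Ioo_of_notMem_meshPoints {L x : ℝ} {n : ℕ} (hn : 1 ≤ n)
    (hx : x ∈ Ioo 0 L \ meshPoints (L / n) n) :
    ∃ i ∈ Finset.Icc 1 n, x ∈ Ioo (((i : ℝ) - 1) * (L / n)) (i * (L / n)) := by
  obtain ⟨⟨hx0, hxL⟩, hxmesh⟩ := hx
  have hn0 : (0 : ℝ) < n := by exact_mod_cast hn
  have hh : 0 < L / n := div_pos (hx0.trans hxL) hn0
  have hdiv : 0 < x / (L / n) := div_pos hx0 hh
  have hi : ⌈x / (L / n)⌉₊ ∈ Finset.Icc 1 n := by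
    refine Finset.mem_Icc.2 ⟨Nat.ceil_pos.2 hdiv, Nat.ceil_le.2 ((div_le_iff₀ hh).2 ?_)⟩
    rw [mul_div_cancel₀ _ hn0.ne']
    exact hxL.le
  refine ⟨_, hi, ?_, lt_of_le_of_ne ((div_le_iff₀ hh).1 (Nat.le_ceil _)) ?_⟩
  · rw [← lt_div_iff₀ hh, sub_lt_iff_lt_add]
    exact Nat.ceil_lt_add_one hdiv.le
  · exact fun hxi => hxmesh ⟨_, hi, hxi.symm⟩

lemma exists_mem_cellOp {X Y : ℝ} {N₁ N₂ : ℕ} (hN₁ : 1 ≤ N₁) (hN₂ : 1 ≤ N₂) {p : ℝ × ℝ}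
    (hp : p ∈ (Ioo 0 X \ meshPoints (X / N₁) N₁) ×ˢ (Ioo 0 Y \ meshPoints (Y / N₂) N₂)) :
    ∃ i ∈ Finset.Icc 1 N₁, ∃ j ∈ Finset.Icc 1 N₂, p ∈ cellOp X Y N₁ N₂ i j := by
  obtain ⟨i, hi, hpi⟩ := exists_mem_Ioo_of_notMem_meshPoints hN₁ hp.1
  obtain ⟨j, hj, hpj⟩ := exists_mem_Ioo_of_notMem_meshPoints hN₂ hp.2
  exact ⟨i, hi, j, hj, hpi, hpj⟩

lemma meshNode_nonneg {X Y : ℝ} (hX : 0 ≤ X) (hY : 0 ≤ Y) {N₁ N₂ i j : ℕ} (hi : 1 ≤ i)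
    (hj : 1 ≤ j) : 0 ≤ meshNode X Y N₁ N₂ i j := by
  have hi' : (1 : ℝ) ≤ i := by exact_mod_cast hi
  have hj' : (1 : ℝ) ≤ j := by exact_mod_cast hj
  exact ⟨mul_nonneg (sub_nonneg.2 hi') (by positivity),
    mul_nonneg (sub_nonneg.2 hj') (by positivity)⟩

lemma meshNode_le {X Y : ℝ} {N₁ N₂ i j : ℕ} {p : ℝ × ℝ} (hp : p ∈ cellOp X Y N₁ N₂ i j) :
    meshNode X Y N₁ N₂ i j ≤ p :=
  ⟨hp.1.1.le, hp.2.1.le⟩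

lemma dist_meshNode_le {X Y δ : ℝ} {N₁ N₂ i j : ℕ} (h₁ : X / N₁ ≤ δ) (h₂ : Y / N₂ ≤ δ)
    {p : ℝ × ℝ} (hp : p ∈ cellOp X Y N₁ N₂ i j) : dist (meshNode X Y N₁ N₂ i j) p ≤ δ := by
  have dist_le : ∀ {k h x : ℝ}, x ∈ Ioo ((k - 1) * h) (k * h) → h ≤ δ → dist ((k - 1) * h) x ≤ δ :=
    fun hx hh => by
      rw [Real.dist_eq, abs_sub_comm, abs_of_pos (sub_pos.2 hx.1)]
      linarith [hx.2]
  exact max_le (dist_le hp.1 h₁) (dist_le hp.2 h₂)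

section Error

variable {X Y : ℝ} {N : ℝ → ℝ} {f : ℝ × ℝ → ℝ} {ψ φ : ℝ → ℝ} {u u0 : ℝ × ℝ → ℝ} {N₁ N₂ i j : ℕ}
  {p : ℝ × ℝ}

lemma GoursatSol.hasMixedDerivAt (hu : GoursatSol X Y N f ψ φ u) (hp : p ∈ opD X Y) :
    HasMixedDerivAt u (pdx u) (pdxy u p) p :=
  ⟨(hu.diffx p hp).hasDerivAt, (hu.diffxy p hp).hasDerivAt⟩

lemma BasicSol.hasMixedDerivAt (hu0 : BasicSol X Y N f ψ φ N₁ N₂ u0) (hi : i ∈ Finset.Icc 1 N₁)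
    (hj : j ∈ Finset.Icc 1 N₂) (hp : p ∈ cellOp X Y N₁ N₂ i j) :
    HasMixedDerivAt u0 (pdx u0) (pdxy u0 p) p :=
  ⟨(hu0.diffx i hi j hj p hp).hasDerivAt, (hu0.diffxy i hi j hj p hp).hasDerivAt⟩

lemma BasicSol.pdxy_sub_pdxy (hu0 : BasicSol X Y N f ψ φ N₁ N₂ u0)
    (hu : GoursatSol X Y N f ψ φ u) (hi : i ∈ Finset.Icc 1 N₁) (hj : j ∈ Finset.Icc 1 N₂)
    (hp : p ∈ cellOp X Y N₁ N₂ i j) (hpD : p ∈ opD X Y) :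
    pdxy u0 p - pdxy u p = N (u p) * u p - N (u0 (meshNode X Y N₁ N₂ i j)) * u0 p := by
  linear_combination hu0.eqn i hi j hj p hp - hu.eqn p hpD

section Comparison

variable {K : NNReal} {R η δ : ℝ}

/-- If the error stays below the barrier `z` up to `p`, then the two solutions and the frozen value
are within `z p + η ≤ 2 z p` of each other. -/
lemma BasicSol.abs_pdxy_sub_pdxy_le (hu0 : BasicSol X Y N f ψ φ N₁ N₂ u0)
    (hu : GoursatSol X Y N f ψ φ u)
    (hK : LipschitzOnWith K (fun p : ℝ × ℝ => N p.1 * p.2) (Metric.closedBall 0 (R + 1)))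
    (huR : ∀ q ∈ clD X Y, |u q| ≤ R)
    (huδ : ∀ q ∈ clD X Y, ∀ r ∈ clD X Y, dist q r ≤ δ → dist (u q) (u r) ≤ η)
    (h₁ : X / N₁ ≤ δ) (h₂ : Y / N₂ ≤ δ) (hi : i ∈ Finset.Icc 1 N₁) (hj : j ∈ Finset.Icc 1 N₂)
    (hp : p ∈ cellOp X Y N₁ N₂ i j) (hpD : p ∈ opD X Y) {z : ℝ × ℝ → ℝ} (hz : Monotone z)
    (hηz : η ≤ z p) (hz1 : z p ≤ 1) (herr : ∀ q ∈ Icc 0 p, |u0 q - u q| < z q) :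
    |pdxy u0 p - pdxy u p| ≤ 2 * K * z p := by
  set m := meshNode X Y N₁ N₂ i j
  have hp0 : 0 ≤ p := ⟨hpD.1.1.le, hpD.2.1.le⟩
  have hm0 : 0 ≤ m := meshNode_nonneg (hpD.1.1.trans hpD.1.2).le (hpD.2.1.trans hpD.2.2).le
    (Finset.mem_Icc.1 hi).1 (Finset.mem_Icc.1 hj).1
  have hmp : m ≤ p := meshNode_le hp
  have hIcc : Icc 0 p ⊆ clD X Y := by
    rw [clD_eq_Icc]
    exact Icc_subset_Icc_right ⟨hpD.1.2.le, hpD.2.2.le⟩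
  have herr' : ∀ q ∈ Icc 0 p, |u0 q - u q| ≤ z p := fun q hq => (herr q hq).le.trans (hz hq.2)
  have hu_le : |u p| ≤ R + 1 := by linarith [huR p (hIcc ⟨hp0, le_rfl⟩)]
  have hu0_le : ∀ q ∈ Icc 0 p, |u0 q| ≤ R + 1 := fun q hq => by
    linarith [abs_sub_abs_le_abs_sub (u0 q) (u q), herr' q hq, huR q (hIcc hq)]
  have hosc : |u m - u p| ≤ η :=
    huδ m (hIcc ⟨hm0, hmp⟩) p (hIcc ⟨hp0, le_rfl⟩) (dist_meshNode_le h₁ h₂ hp)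
  have hfrozen : |u0 m - u p| ≤ 2 * z p := by
    linarith [abs_sub_le (u0 m) (u m) (u p), herr' m ⟨hm0, hmp⟩]
  have hunfrozen : |u0 p - u p| ≤ 2 * z p := by
    linarith [herr' p ⟨hp0, le_rfl⟩, abs_nonneg (u0 p - u p)]
  calc
    |pdxy u0 p - pdxy u p| = |N (u0 m) * u0 p - N (u p) * u p| := by
      rw [hu0.pdxy_sub_pdxy hu hi hj hp hpD, abs_sub_comm]
    _ ≤ K * (2 * z p) :=
      abs_comp_mul_sub_comp_mul_le hK (hu0_le m ⟨hm0, hmp⟩) (hu0_le p ⟨hp0, le_rfl⟩) hu_le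
        hfrozen hunfrozen
    _ = 2 * K * z p := by ring

/-- The rate `√(2K)` makes the mixed derivative of the barrier equal to the bound `2K z` that
`BasicSol.abs_pdxy_sub_pdxy_le` gives for the error. -/
lemma BasicSol.abs_sub_lt_expBarrier (hu0 : BasicSol X Y N f ψ φ N₁ N₂ u0)
    (hu : GoursatSol X Y N f ψ φ u) (hN₁ : 1 ≤ N₁) (hN₂ : 1 ≤ N₂)
    (hK : LipschitzOnWith K (fun p : ℝ × ℝ => N p.1 * p.2) (Metric.closedBall 0 (R + 1)))
    (huR : ∀ q ∈ clD X Y, |u q| ≤ R)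
    (huδ : ∀ q ∈ clD X Y, ∀ r ∈ clD X Y, dist q r ≤ δ → dist (u q) (u r) ≤ η)
    (h₁ : X / N₁ ≤ δ) (h₂ : Y / N₂ ≤ δ) (hη : 0 < η) (hη1 : expBarrier η √(2 * K) (X, Y) ≤ 1) :
    ∀ p ∈ clD X Y, |u0 p - u p| < expBarrier η √(2 * K) p := by
  have hcont := hu0.cont.sub hu.cont
  have hmono := expBarrier.monotone hη.le (Real.sqrt_nonneg (2 * K))
  have hderiv := expBarrier.hasMixedDerivAt η √(2 * K)
  have hsq : √(2 * K : ℝ) ^ 2 = 2 * K := Real.sq_sqrt (by positivity)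
  rw [clD_eq_Icc] at hcont ⊢
  refine abs_lt_of_abs_mixedDeriv_le (w := u0 - u) (wx := pdx u0 - pdx u)
    (wxy := pdxy u0 - pdxy u) (meshPoints_finite (X / N₁) N₁) (meshPoints_finite (Y / N₂) N₂)
    hcont (expBarrier.continuous η _).continuousOn
    (fun x hx => sub_eq_zero.2 ((hu0.bc1 x hx).trans (hu.bc1 x hx).symm))
    (fun y hy => sub_eq_zero.2 ((hu0.bc2 y hy).trans (hu.bc2 y hy).symm))
    (fun p hp => expBarrier.rectIncrement_lt hη (Real.sqrt_nonneg _) hp.1)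
    (fun r hr => ?_) (fun r _ => hderiv r) fun r hr herr => ?_ <;>
    obtain ⟨i, hi, j, hj, hrcell⟩ := exists_mem_cellOp hN₁ hN₂ hr <;>
    have hrD : r ∈ opD X Y := ⟨hr.1.1, hr.2.1⟩
  · exact (hu0.hasMixedDerivAt hi hj hrcell).sub (hu.hasMixedDerivAt hrD)
  · rw [hsq]
    exact hu0.abs_pdxy_sub_pdxy_le hu hK huR huδ h₁ h₂ hi hj hrcell hrD hmono
      (expBarrier.le_apply hη.le (Real.sqrt_nonneg _) ⟨hrD.1.1.le, hrD.2.1.le⟩)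
      ((hmono ⟨hrD.1.2.le, hrD.2.2.le⟩).trans hη1) herr

end Comparison

theorem GoursatSol.exists_forall_abs_basicSol_sub_lt (hN : LocallyLipschitz N)
    (hu : GoursatSol X Y N f ψ φ u) {ε : ℝ} (hε : 0 < ε) :
    ∃ δ > (0 : ℝ), ∀ N₁ N₂ : ℕ, 1 ≤ N₁ → 1 ≤ N₂ → X / N₁ ≤ δ → Y / N₂ ≤ δ →
      ∀ u0 : ℝ × ℝ → ℝ, BasicSol X Y N f ψ φ N₁ N₂ u0 →
        ∀ p ∈ clD X Y, |u0 p - u p| < ε := by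
  obtain ⟨R, huR⟩ := (isCompact_clD X Y).exists_bound_of_continuousOn hu.cont
  obtain ⟨K, hK⟩ :=
    (locallyLipschitz_comp_fst_mul_snd hN).locallyLipschitzOn.exists_lipschitzOnWith_of_compact
      (isCompact_closedBall 0 (R + 1))
  obtain ⟨η, hη, hηcorner⟩ := expBarrier.exists_pos_apply_eq √(2 * K) (X, Y) (lt_min hε one_pos)
  obtain ⟨δ, hδ, huδ⟩ := Metric.uniformContinuousOn_iff_le.1
    ((isCompact_clD X Y).uniformContinuousOn_of_continuous hu.cont) η hη
  refine ⟨δ, hδ, fun N₁ N₂ hN₁ hN₂ h₁ h₂ u0 hu0 p hp => ?_⟩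
  calc
    |u0 p - u p| < expBarrier η √(2 * K) p :=
      hu0.abs_sub_lt_expBarrier hu hN₁ hN₂ hK huR huδ h₁ h₂ hη
        (hηcorner.le.trans (min_le_right _ _)) p hp
    _ ≤ expBarrier η √(2 * K) (X, Y) :=
      expBarrier.monotone hη.le (Real.sqrt_nonneg _) ⟨hp.1.2, hp.2.2⟩
    _ ≤ ε := hηcorner.le.trans (min_le_left _ _)

end Error

theorem basic_solution_uniform_bound_general {X Y : ℝ} {N : ℝ → ℝ} (hN : LocallyLipschitz N)
    {f : ℝ × ℝ → ℝ} {ψ φ : ℝ → ℝ} {u : ℝ × ℝ → ℝ} (hu : GoursatSol X Y N f ψ φ u) :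
    ∃ δ > (0 : ℝ), ∃ Mu > (0 : ℝ), ∀ N₁ N₂ : ℕ, 1 ≤ N₁ → 1 ≤ N₂ →
      X / N₁ ≤ δ → Y / N₂ ≤ δ →
      ∀ u0 : ℝ × ℝ → ℝ, BasicSol X Y N f ψ φ N₁ N₂ u0 →
        ∀ p ∈ clD X Y, |u0 p| ≤ Mu := by
  obtain ⟨R, huR⟩ := (isCompact_clD X Y).exists_bound_of_continuousOn hu.cont
  obtain ⟨δ, hδ, hclose⟩ := hu.exists_forall_abs_basicSol_sub_lt hN one_pos
  refine ⟨δ, hδ, |R| + 1, by positivity, fun N₁ N₂ hN₁ hN₂ h₁ h₂ u0 hu0 p hp => ?_⟩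
  have huRp : |u p| ≤ R := huR p hp
  linarith [abs_sub_abs_le_abs_sub (u0 p) (u p), hclose N₁ N₂ hN₁ hN₂ h₁ h₂ u0 hu0 p hp,
    le_abs_self R]

/-- There are mesh-independent constants `δ, M_u > 0` such that for
every mesh with `h₁ ≤ δ`, `h₂ ≤ δ`, the solution `u⁰` of the basic problem satisfies
`sup_{D̄} |u⁰| ≤ M_u`. -/
theorem basic_solution_uniform_bound
    (X Y : ℝ) (hX : 0 < X) (hY : 0 < Y)
    (ν : ℕ → ℝ) (N : ℝ → ℝ)
    (hN : ∀ v : ℝ, HasSum (fun s : ℕ => ν s * v ^ s) (N v))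
    (f : ℝ × ℝ → ℝ) (hf : ContinuousOn f (clD X Y))
    (ψ φ : ℝ → ℝ)
    (hψc : ContinuousOn ψ (Icc 0 X))
    (hψd : ∀ x ∈ Ioo (0 : ℝ) X, DifferentiableAt ℝ ψ x)
    (hφc : ContinuousOn φ (Icc 0 Y))
    (hφd : ∀ y ∈ Ioo (0 : ℝ) Y, DifferentiableAt ℝ φ y)
    (hcomp : ψ 0 = φ 0)
    (u : ℝ × ℝ → ℝ) (hu : GoursatSol X Y N f ψ φ u)
    (huniq : ∀ v : ℝ × ℝ → ℝ, GoursatSol X Y N f ψ φ v → ∀ p ∈ clD X Y, v p = u p) :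
    ∃ δ > (0 : ℝ), ∃ Mu > (0 : ℝ), ∀ N₁ N₂ : ℕ, 1 ≤ N₁ → 1 ≤ N₂ →
      X / N₁ ≤ δ → Y / N₂ ≤ δ →
      ∀ u0 : ℝ × ℝ → ℝ, BasicSol X Y N f ψ φ N₁ N₂ u0 →
        ∀ p ∈ clD X Y, |u0 p| ≤ Mu := by
  exact basic_solution_uniform_bound_general (locallyLipschitz_of_hasSum_pow hN) hu
end
end
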